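/- There exist an integer q₁ ≥ 2 and an ergodic C^∞ diffeomorphism T of the torus 𝕋² preserving the Haar–Lebesgue probability measure λ such that T is measure-theoretically isomorphic to the rotation of the circle by some irrational number and the upper topological slow entropy of T with respect to the intermediate scaling family a^{int1,4}_m(t) (with base q₁) equals 1. -/

import Mathlib

open MeasureTheory Filter Set
open scoped Topology ENNReal NNReal

noncomputable section

/-- The Bowen metric `d_n^T(x,y) = max_{0 ≤ i ≤ n-1} d(T^i x, T^i y)`. -/
def bowenDist {X : Type*} [PseudoMetricSpace X] (T : X → X) (n : ℕ) (x y : X) : ℝ :=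
  (((Finset.range n).sup fun i => nndist (T^[i] x) (T^[i] y)) : ℝ≥0)

/-- `N_{d_n^T}(ε)`: the minimal number of `(ε,n)`-Bowen balls of `T` needed to cover the
whole space. -/
def bowenCoverNum {X : Type*} [PseudoMetricSpace X] (T : X → X) (n : ℕ) (ε : ℝ) : ℕ :=
  sInf {N : ℕ | ∃ F : Finset X, F.card = N ∧ ∀ y : X, ∃ x ∈ F, bowenDist T n x y < ε}

/-- `N(ε)`: the supremum (`0` if the set is empty, by the `Real.sSup` convention) of all
`t > 0` such that `limsup_n N_{d_n^T}(ε) / a_n(t) > 0`. -/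
def topSlowEntFun {X : Type*} [PseudoMetricSpace X] (T : X → X) (a : ℕ → ℝ → ℝ) (ε : ℝ) : ℝ :=
  sSup {t : ℝ | 0 < t ∧
    0 < Filter.atTop.limsup fun n => (bowenCoverNum T n ε : ℝ≥0∞) / ENNReal.ofReal (a n t)}

/-- The upper topological slow entropy of `T` with respect to the scaling family `a`
equals `E`, i.e. `N(ε) → E` as `ε → 0⁺`. -/
def HasUpperTopSlowEntropy {X : Type*} [PseudoMetricSpace X] (T : X → X)
    (a : ℕ → ℝ → ℝ) (E : ℝ) : Prop :=
  Filter.Tendsto (topSlowEntFun T a) (𝓝[>] (0 : ℝ)) (𝓝 E)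

/-- The circle `𝕋¹ = ℝ/ℤ` with its quotient metric and Haar–Lebesgue probability
measure `volume`. -/
abbrev Torus1 : Type := AddCircle (1 : ℝ)

/-- The 2-torus `𝕋² = ℝ²/ℤ²`, with its quotient (flat) metric, its Borel σ-algebra and
its Haar–Lebesgue probability measure `volume`. -/
abbrev Torus2 : Type := AddCircle (1 : ℝ) × AddCircle (1 : ℝ)

/-- Canonical projection `ℝ² → 𝕋²`. -/
def torusProj : ℝ × ℝ → Torus2 := fun p => ((p.1 : Torus1), (p.2 : Torus1))

/-- `F : ℝ² → ℝ²` is a lift of `T : 𝕋² → 𝕋²`. -/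
def IsLiftOf (F : ℝ × ℝ → ℝ × ℝ) (T : Torus2 → Torus2) : Prop :=
  ∀ p, torusProj (F p) = T (torusProj p)

/-- `T` is a `C^k` diffeomorphism of the torus: it is a bijection and both `T` and `T⁻¹`
admit `C^k` lifts to the universal cover `ℝ²`. -/
def IsCkTorusDiffeo (k : ℕ∞) (T : Torus2 → Torus2) : Prop :=
  Function.Bijective T ∧
  (∃ F : ℝ × ℝ → ℝ × ℝ, ContDiff ℝ k F ∧ IsLiftOf F T) ∧
  (∃ G : ℝ × ℝ → ℝ × ℝ, ContDiff ℝ k G ∧ IsLiftOf G (Function.invFun T))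

/-- `T` is weakly mixing w.r.t. the measure `μ`: `T × T` is ergodic for `μ × μ`. -/
def WeaklyMixing {X : Type*} [MeasurableSpace X] (T : X → X) (μ : Measure X) : Prop :=
  Ergodic (fun p : X × X => (T p.1, T p.2)) (μ.prod μ)

/-- `T` is uniquely ergodic with the Haar–Lebesgue measure `volume` as its unique
invariant Borel probability measure. -/
def UniquelyErgodicWithVolume (T : Torus2 → Torus2) : Prop :=
  MeasurePreserving T volume volume ∧
  ∀ μ : Measure Torus2, IsProbabilityMeasure μ → MeasurePreserving T μ μ → μ = volume

/-- `T` (preserving the Haar measure `volume` on `𝕋²`) is measure-theoretically isomorphic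
to the rotation of the circle `𝕋¹ = ℝ/ℤ` by some irrational number `α`. -/
def IsoToIrrationalRotation (T : Torus2 → Torus2) : Prop :=
  ∃ α : ℝ, Irrational α ∧
    ∃ (A : Set Torus2) (B : Set Torus1) (ψ : Torus2 → Torus1) (φ : Torus1 → Torus2),
      MeasurableSet A ∧ MeasurableSet B ∧
      volume Aᶜ = 0 ∧ volume Bᶜ = 0 ∧
      Set.MapsTo T A A ∧ Set.MapsTo (fun y : Torus1 => y + (α : Torus1)) B B ∧
      Measurable ψ ∧ Measurable φ ∧
      Set.MapsTo ψ A B ∧ Set.MapsTo φ B A ∧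
      (∀ x ∈ A, φ (ψ x) = x) ∧ (∀ y ∈ B, ψ (φ y) = y) ∧
      Measure.map ψ volume = volume ∧
      (∀ x ∈ A, ψ (T x) = ψ x + (α : Torus1))

/-- A finite measurable partition of `X`. -/
structure FinMeasPartition (X : Type*) [MeasurableSpace X] where
  card : ℕ
  piece : Fin card → Set X
  measurable : ∀ i, MeasurableSet (piece i)
  disjoint : Pairwise fun i j => Disjoint (piece i) (piece j)
  cover : (⋃ i, piece i) = Set.univ

open Classical in
/-- The normalized Hamming distance between the length-`n` `P`-codings of the `T`-orbits
of `x` and `y` (the codings differ at time `k` iff `T^k x` and `T^k y` lie in different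
pieces of `P`). -/
def codeHammingDist {X : Type*} [MeasurableSpace X] (T : X → X) (P : FinMeasPartition X)
    (n : ℕ) (x y : X) : ℝ :=
  (((Finset.range n).filter fun k =>
      ¬ ∃ i, T^[k] x ∈ P.piece i ∧ T^[k] y ∈ P.piece i).card : ℝ) / n

/-- `S^H_P(T,n,ε)`: the minimal number of `(ε,n)`-Hamming balls whose union has
`μ`-measure greater than `1 - ε`. -/
def hammingCoverNum {X : Type*} [MeasurableSpace X] (μ : Measure X) (T : X → X)
    (P : FinMeasPartition X) (n : ℕ) (ε : ℝ) : ℕ :=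
  sInf {N : ℕ | ∃ F : Finset X, F.card = N ∧
    ENNReal.ofReal (1 - ε) < μ (⋃ x ∈ F, {y | codeHammingDist T P n x y < ε})}

/-- For a fixed partition `P` and `ε > 0`: the supremum (with the `Real.sSup` convention,
`0` if the set is empty) of all `t > 0` with `limsup_n S^H_P(T,n,ε)/a_n(t) > 0`. -/
def measSlowEntFun {X : Type*} [MeasurableSpace X] (μ : Measure X) (T : X → X)
    (a : ℕ → ℝ → ℝ) (P : FinMeasPartition X) (ε : ℝ) : ℝ :=
  sSup {t : ℝ | 0 < t ∧
    0 < Filter.atTop.limsup fun n =>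
      (hammingCoverNum μ T P n ε : ℝ≥0∞) / ENNReal.ofReal (a n t)}

/-- The upper measure-theoretic slow entropy of `(T,μ)` w.r.t. the scaling family `a`
equals `E`: for every finite measurable partition the limit as `ε → 0⁺` exists, and the
least upper bound over all partitions of these limits is `E`. -/
def HasUpperMeasSlowEntropy {X : Type*} [MeasurableSpace X] (μ : Measure X) (T : X → X)
    (a : ℕ → ℝ → ℝ) (E : ℝ) : Prop :=
  (∀ P : FinMeasPartition X, ∃ e : ℝ,
      Filter.Tendsto (measSlowEntFun μ T a P) (𝓝[>] (0 : ℝ)) (𝓝 e)) ∧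
  IsLUB {e : ℝ | ∃ P : FinMeasPartition X,
      Filter.Tendsto (measSlowEntFun μ T a P) (𝓝[>] (0 : ℝ)) (𝓝 e)} E

/-- `Γ_r(x) = (Γ(x^{1/r} + 1))^r`, where `Γ` is the Euler Gamma function. -/
def GammaR (r : ℕ) (x : ℝ) : ℝ := (Real.Gamma (x ^ ((r : ℝ)⁻¹) + 1)) ^ r

/-- The inverse of `Γ_r` on `[1,∞)` (where `Γ_r` is strictly increasing with `Γ_r 1 = 1`). -/
def GammaRInv (r : ℕ) (y : ℝ) : ℝ := sSup {x : ℝ | 1 ≤ x ∧ GammaR r x ≤ y}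

/-- The intermediate scaling family `a^{int1,r}_m(t) = m^(t / Γ_r⁻¹(ln m / ln q₁))`. -/
def intScale1 (r q₁ : ℕ) (m : ℕ) (t : ℝ) : ℝ :=
  (m : ℝ) ^ (t / GammaRInv r (Real.log m / Real.log q₁))

/-- The intermediate scaling family
`a^{int2,r}_m(t) = m^(t / (Γ_r⁻¹(ln m / ln q₁))^((r-2)/r))`. -/
def intScale2 (r q₁ : ℕ) (m : ℕ) (t : ℝ) : ℝ :=
  (m : ℝ) ^ (t / GammaRInv r (Real.log m / Real.log q₁) ^ (((r : ℝ) - 2) / (r : ℝ)))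

/-- The logarithmic scaling family `a^{ln}_m(t) = (ln m)^t`. -/
def logScale (m : ℕ) (t : ℝ) : ℝ := Real.log m ^ t

/-- The polynomial scaling family `a^{pol}_m(t) = m^t`. -/
def polScale (m : ℕ) (t : ℝ) : ℝ := (m : ℝ) ^ t

end

section
open MeasureTheory Filter Set
open scoped Topology ENNReal NNReal ContDiff

/-! ### Scaling family -/

lemma gammaR4_strictMono : StrictMonoOn (GammaR 4) (Ici 1) := by
  intro x hx y hy hxy
  simp only [mem_Ici] at hx hy
  unfold GammaR
  have h1 : x ^ (((4:ℕ):ℝ)⁻¹) < y ^ (((4:ℕ):ℝ)⁻¹) :=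
    Real.rpow_lt_rpow (by linarith) hxy (by norm_num)
  have h2 : 1 ≤ x ^ (((4:ℕ):ℝ)⁻¹) := Real.one_le_rpow hx (by norm_num)
  have h3 := Real.Gamma_strictMonoOn_Ici (a := x ^ (((4:ℕ):ℝ)⁻¹) + 1)
    (b := y ^ (((4:ℕ):ℝ)⁻¹) + 1) (by simp only [mem_Ici]; linarith)
    (by simp only [mem_Ici]; linarith) (by linarith)
  exact pow_lt_pow_left₀ h3 (Real.Gamma_pos_of_pos (by linarith)).le (by norm_num)

lemma gammaR4_one : GammaR 4 1 = 1 := by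
  unfold GammaR
  norm_num

lemma gammaR4_cont : ContinuousOn (GammaR 4) (Ici 1) := by
  intro x hx
  simp only [mem_Ici] at hx
  apply ContinuousAt.continuousWithinAt
  unfold GammaR
  apply ContinuousAt.pow
  have h2 : 1 ≤ x ^ (((4:ℕ):ℝ)⁻¹) := Real.one_le_rpow hx (by norm_num)
  have h3 : ContinuousAt Real.Gamma (x ^ (((4:ℕ):ℝ)⁻¹) + 1) := by
    apply (Real.differentiableAt_Gamma _).continuousAt
    intro m
    have : (0:ℝ) ≤ m := Nat.cast_nonneg m
    linarith
  have h4 : ContinuousAt (fun x : ℝ => x ^ (((4:ℕ):ℝ)⁻¹) + 1) x :=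
    (Real.continuousAt_rpow_const x _ (Or.inr (by norm_num))).add continuousAt_const
  exact ContinuousAt.comp (f := fun x : ℝ => x ^ (((4:ℕ):ℝ)⁻¹) + 1) h3 h4

lemma gammaR4_pow (k : ℕ) : GammaR 4 ((k:ℝ)^4) = ((k.factorial : ℝ))^4 := by
  unfold GammaR
  rw [Real.pow_rpow_inv_natCast (Nat.cast_nonneg k) (by norm_num), Real.Gamma_nat_eq_factorial]

lemma gammaR4_surj {y : ℝ} (hy : 1 ≤ y) : ∃ x, 1 ≤ x ∧ GammaR 4 x = y := by
  obtain ⟨k, hk⟩ := exists_nat_ge y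
  have hk1 : 1 ≤ k := by
    have : (1:ℝ) ≤ k := hy.trans hk
    exact_mod_cast this
  have h1 : (1:ℝ) ≤ (k:ℝ)^4 := one_le_pow₀ (by exact_mod_cast hk1)
  have h2 : y ≤ GammaR 4 ((k:ℝ)^4) := by
    rw [gammaR4_pow]
    have h3 : (k:ℝ) ≤ k.factorial := by exact_mod_cast Nat.self_le_factorial k
    have h4 : (1:ℝ) ≤ k.factorial := by exact_mod_cast Nat.factorial_pos k
    calc y ≤ k.factorial := hk.trans h3
      _ ≤ _ := le_self_pow₀ h4 (by norm_num)
  have := intermediate_value_Icc h1 (gammaR4_cont.mono Icc_subset_Ici_self)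
  obtain ⟨x, hx, hxy⟩ := this ⟨by rw [gammaR4_one]; exact hy, h2⟩
  exact ⟨x, hx.1, hxy⟩

lemma gammaRInv_spec {y : ℝ} (hy : 1 ≤ y) :
    1 ≤ GammaRInv 4 y ∧ GammaR 4 (GammaRInv 4 y) = y := by
  obtain ⟨x, hx, hxy⟩ := gammaR4_surj hy
  have : GammaRInv 4 y = x := by
    unfold GammaRInv
    apply IsGreatest.csSup_eq
    refine ⟨⟨hx, hxy.le⟩, ?_⟩
    rintro z ⟨hz, hzy⟩
    rw [← hxy] at hzy
    exact (gammaR4_strictMono.le_iff_le hz hx).1 hzy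
  rw [this]; exact ⟨hx, hxy⟩

lemma gammaRInv_mono {y y' : ℝ} (hy : 1 ≤ y) (h : y ≤ y') : GammaRInv 4 y ≤ GammaRInv 4 y' := by
  have h1 := gammaRInv_spec hy
  have h2 := gammaRInv_spec (hy.trans h)
  rw [← gammaR4_strictMono.le_iff_le h1.1 h2.1, h1.2, h2.2]
  exact h

lemma gammaRInv_tendsto : Tendsto (GammaRInv 4) atTop atTop := by
  rw [tendsto_atTop_atTop]
  intro b
  refine ⟨max 1 (GammaR 4 (max b 1)), fun y hy => ?_⟩
  have hy1 : 1 ≤ y := (le_max_left _ _).trans hy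
  have h1 := gammaRInv_spec hy1
  have : max b 1 ≤ GammaRInv 4 y := by
    rw [← gammaR4_strictMono.le_iff_le (show max b 1 ∈ Ici (1:ℝ) from mem_Ici.2 (le_max_right _ _)) h1.1, h1.2]
    exact (le_max_right _ _).trans hy
  exact (le_max_left _ _).trans this

/-- `y / Γ₄⁻¹ y = Γ(s)^4` with `s = (Γ₄⁻¹ y)^(1/4)`. -/
lemma div_gammaRInv {y : ℝ} (hy : 1 ≤ y) :
    y / GammaRInv 4 y = (Real.Gamma ((GammaRInv 4 y) ^ (((4:ℕ):ℝ)⁻¹)))^4 := by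
  obtain ⟨h1, h2⟩ := gammaRInv_spec hy
  set x := GammaRInv 4 y
  set s := x ^ (((4:ℕ):ℝ)⁻¹) with hs
  have hs1 : 1 ≤ s := Real.one_le_rpow h1 (by norm_num)
  have hx : x = s ^ 4 := by rw [hs, Real.rpow_inv_natCast_pow (by linarith) (by norm_num)]
  have h3 : y = (Real.Gamma (s + 1))^4 := h2.symm
  rw [h3, Real.Gamma_add_one (by linarith), hx]
  field_simp

/-- The growth function. -/
noncomputable def scG (m : ℕ) : ℝ := GammaRInv 4 (Real.log m / Real.log 2)
noncomputable def scL (m : ℕ) : ℝ := Real.log m / scG m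

lemma log2pos : 0 < Real.log 2 := Real.log_pos (by norm_num)

lemma one_le_logdiv {m : ℕ} (hm : 2 ≤ m) : 1 ≤ Real.log m / Real.log 2 := by
  rw [le_div_iff₀ log2pos, one_mul]
  exact Real.log_le_log (by norm_num) (by exact_mod_cast hm)

lemma tendsto_logdiv : Tendsto (fun m : ℕ => Real.log m / Real.log 2) atTop atTop :=
  (Real.tendsto_log_atTop.comp tendsto_natCast_atTop_atTop).atTop_div_const log2pos

lemma scG_one_le {m : ℕ} (hm : 2 ≤ m) : 1 ≤ scG m := (gammaRInv_spec (one_le_logdiv hm)).1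

lemma scG_mono {m m' : ℕ} (hm : 2 ≤ m) (h : m ≤ m') : scG m ≤ scG m' := by
  apply gammaRInv_mono (one_le_logdiv hm)
  have : Real.log m ≤ Real.log m' := Real.log_le_log (by positivity) (by exact_mod_cast h)
  exact div_le_div_of_nonneg_right this log2pos.le

lemma scG_tendsto : Tendsto scG atTop atTop := gammaRInv_tendsto.comp tendsto_logdiv

lemma scL_eq {m : ℕ} (hm : 2 ≤ m) :
    scL m = Real.log 2 * (Real.Gamma ((scG m) ^ (((4:ℕ):ℝ)⁻¹)))^4 := by
  have := div_gammaRInv (one_le_logdiv hm)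
  unfold scL
  unfold scG at *
  rw [← this]
  field_simp [log2pos.ne']

lemma scS_tendsto : Tendsto (fun m => (scG m) ^ (((4:ℕ):ℝ)⁻¹)) atTop atTop :=
  (tendsto_rpow_atTop (by norm_num)).comp scG_tendsto

lemma gamma_tendsto : Tendsto Real.Gamma atTop atTop := by
  rw [tendsto_atTop_atTop]
  intro b
  obtain ⟨k, hk⟩ := exists_nat_ge b
  refine ⟨(k:ℝ) + 2, fun x hx => ?_⟩
  have hk0 : (0:ℝ) ≤ k := Nat.cast_nonneg k
  have h1 := Real.Gamma_strictMonoOn_Ici.monotoneOn (a := (k:ℝ) + 2) (b := x)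
    (by simp only [mem_Ici]; linarith) (by simp only [mem_Ici]; linarith) hx
  have h2 : Real.Gamma ((k:ℝ) + 2) = ((k+1).factorial : ℝ) := by
    rw [← Real.Gamma_nat_eq_factorial]; push_cast; ring_nf
  have h3 : (k:ℝ) ≤ ((k+1).factorial : ℝ) := by
    exact_mod_cast (Nat.le_succ k).trans (Nat.self_le_factorial (k+1))
  linarith

lemma scL_tendsto : Tendsto scL atTop atTop := by
  have h : Tendsto (fun m => Real.log 2 * (Real.Gamma ((scG m) ^ (((4:ℕ):ℝ)⁻¹)))^4) atTop atTop :=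
    ((tendsto_pow_atTop (by norm_num)).comp (gamma_tendsto.comp scS_tendsto)).const_mul_atTop log2pos
  refine h.congr' ?_
  filter_upwards [eventually_ge_atTop 2] with m hm
  exact (scL_eq hm).symm

lemma scL_mono : ∃ m₀ : ℕ, 2 ≤ m₀ ∧ ∀ m m', m₀ ≤ m → m ≤ m' → scL m ≤ scL m' := by
  obtain ⟨m₀, h0⟩ := eventually_atTop.1 ((scS_tendsto.eventually_ge_atTop 2).and
    (eventually_ge_atTop 2))
  refine ⟨m₀, (h0 m₀ le_rfl).2, fun m m' hm hm' => ?_⟩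
  obtain ⟨h1, h2⟩ := h0 m hm
  obtain ⟨h3, h4⟩ := h0 m' (hm.trans hm')
  rw [scL_eq h2, scL_eq h4]
  have h5 : (scG m) ^ (((4:ℕ):ℝ)⁻¹) ≤ (scG m') ^ (((4:ℕ):ℝ)⁻¹) :=
    Real.rpow_le_rpow (by linarith [scG_one_le h2]) (scG_mono h2 hm') (by norm_num)
  have h6 := Real.Gamma_strictMonoOn_Ici.monotoneOn h1 h3 h5
  have h7 : 0 < Real.Gamma ((scG m) ^ (((4:ℕ):ℝ)⁻¹)) := Real.Gamma_pos_of_pos (by linarith)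
  have := log2pos
  gcongr

lemma intScale_eq {m : ℕ} (hm : 1 ≤ m) (t : ℝ) :
    intScale1 4 2 m t = Real.exp (t * scL m) := by
  unfold intScale1 scL scG
  rw [Real.rpow_def_of_pos (by exact_mod_cast hm)]
  congr 1
  push_cast
  ring

/-- the integer shear amplitude -/
noncomputable def scS (m : ℕ) : ℕ := ⌊Real.exp (scL m)⌋₊

lemma scS_le (m : ℕ) : (scS m : ℝ) ≤ Real.exp (scL m) := Nat.floor_le (Real.exp_pos _).le

lemma scS_nat_tendsto : Tendsto scS atTop atTop :=
  tendsto_nat_floor_atTop.comp (Real.tendsto_exp_atTop.comp scL_tendsto)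

lemma scL_div_log : Tendsto (fun m => scG m) atTop atTop := scG_tendsto

lemma scM_ev (κ : ℝ) (hκ : 0 < κ) : ∀ᶠ m : ℕ in atTop,
    Real.log (κ/2) + Real.log m - scL m ≤ Real.log (⌊κ * m / scS m⌋₊ : ℕ) ∧
    (1/2) * Real.log m ≤ Real.log (κ/2) + Real.log m - scL m ∧ 1 ≤ ⌊κ * m / scS m⌋₊ := by
  have hlog : Tendsto (fun m : ℕ => Real.log m) atTop atTop :=
    Real.tendsto_log_atTop.comp tendsto_natCast_atTop_atTop
  filter_upwards [scG_tendsto.eventually_ge_atTop 4, scS_nat_tendsto.eventually_ge_atTop 1,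
    eventually_ge_atTop 2, hlog.eventually_ge_atTop (4 * |Real.log (κ/2)|),
    hlog.eventually_gt_atTop 0]
    with m hG hS hm hl hlp
  have hL : scL m ≤ Real.log m / 4 := by
    unfold scL; gcongr
  have hL2 : (1/2) * Real.log m ≤ Real.log (κ/2) + Real.log m - scL m := by
    have := neg_abs_le (Real.log (κ/2)); linarith
  have hS0 : (0:ℝ) < scS m := by exact_mod_cast hS
  have hm0 : (0:ℝ) < m := by positivity
  have e1 : κ / 2 * m / Real.exp (scL m) ≤ κ / 2 * m / scS m := by
    apply div_le_div_of_nonneg_left (by positivity) hS0 (scS_le m)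
  have e2 : Real.log (κ / 2 * m / Real.exp (scL m)) = Real.log (κ/2) + Real.log m - scL m := by
    rw [Real.log_div (by positivity) (Real.exp_pos _).ne', Real.log_mul (by positivity) hm0.ne',
      Real.log_exp]
  have e3 : 1 < κ / 2 * m / Real.exp (scL m) := by
    rw [← Real.log_pos_iff (by positivity), e2]; linarith
  have e4 : κ / 2 * m / scS m ≤ (⌊κ * m / scS m⌋₊ : ℝ) := by
    have := Nat.lt_floor_add_one (κ * m / scS m)
    have h2 : κ * m / scS m = 2 * (κ / 2 * m / scS m) := by ring
    rw [h2] at this ⊢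
    linarith
  refine ⟨?_, hL2, ?_⟩
  · rw [← e2]
    exact Real.log_le_log (by linarith) (e1.trans e4)
  · have : (1:ℝ) ≤ (⌊κ * m / scS m⌋₊ : ℝ) := by linarith
    exact_mod_cast this

lemma scM_tendsto (κ : ℝ) (hκ : 0 < κ) :
    Tendsto (fun m : ℕ => ⌊κ * m / scS m⌋₊) atTop atTop := by
  have hlog : Tendsto (fun m : ℕ => Real.log m) atTop atTop :=
    Real.tendsto_log_atTop.comp tendsto_natCast_atTop_atTop
  have h1 : Tendsto (fun m : ℕ => Real.log (⌊κ * m / scS m⌋₊ : ℕ)) atTop atTop := by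
    refine tendsto_atTop_mono' _ ?_ (hlog.const_mul_atTop (by norm_num : (0:ℝ) < 1/2))
    filter_upwards [scM_ev κ hκ] with m hm
    linarith [hm.1, hm.2.1]
  rw [← tendsto_natCast_atTop_iff (R := ℝ)]
  refine tendsto_atTop_mono' _ ?_ h1
  filter_upwards with m
  exact Real.log_le_self (Nat.cast_nonneg _)

/-- upper counting property -/
lemma scale_upper (κ K e : ℝ) (hκ : 0 < κ) (hκ1 : κ ≤ 1) (hK : 0 < K) (he : 0 < e) : ∀ᶠ m : ℕ in atTop,
    ∀ m' : ℕ, ⌊κ * m / scS m⌋₊ ≤ m' → K * scS m ≤ intScale1 4 2 m' (1 + e) := by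
  obtain ⟨m₀, hm₀, hmono⟩ := scL_mono
  have c1 : Tendsto (fun m => (1 + e) * (1/scG m)) atTop (𝓝 0) := by
    have : Tendsto (fun m => (1/scG m)) atTop (𝓝 0) := by
      simp only [one_div]; exact scG_tendsto.inv_tendsto_atTop
    simpa using this.const_mul (1+e)
  filter_upwards [scM_ev κ hκ, (scM_tendsto κ hκ).eventually_ge_atTop m₀,
    scG_tendsto.eventually_ge_atTop 1, scS_nat_tendsto.eventually_ge_atTop 1,
    eventually_ge_atTop 2, c1.eventually_le_const (show (0:ℝ) < e/2 by linarith),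
    scL_tendsto.eventually_ge_atTop ((2 / e) * (|Real.log K| + (1+e)*|Real.log (κ/2)|)),
    scL_tendsto.eventually_ge_atTop 0]
    with m hm hM hG hS hm2 hc hL hL0 m' hm'
  set M := ⌊κ * m / scS m⌋₊ with hMdef
  have hM' : 1 ≤ m' := by omega
  rw [intScale_eq hM']
  have hS0 : (0:ℝ) < scS m := by exact_mod_cast hS
  have hG0 : 0 < scG m := by linarith
  have key : Real.log K + scL m ≤ (1 + e) * scL m' := by
    have h1 : scL M ≤ scL m' := hmono _ _ hM hm'
    have h2 : (Real.log (κ/2) + Real.log m - scL m) / scG m ≤ scL m' := by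
      have hle : M ≤ m := by
        have : κ * m / scS m ≤ m := by
          rw [div_le_iff₀ hS0]
          have hS1 : (1:ℝ) ≤ scS m := by exact_mod_cast hS
          have hm0 : (0:ℝ) ≤ m := Nat.cast_nonneg m
          nlinarith
        calc M ≤ ⌊(m:ℝ)⌋₊ := Nat.floor_mono this
          _ = m := Nat.floor_natCast m
      refine le_trans ?_ h1
      have h3 := scG_mono (hm₀.trans hM) hle
      have h4 := scG_one_le (hm₀.trans hM)
      calc (Real.log (κ/2) + Real.log m - scL m) / scG m ≤ Real.log M / scG m :=
            div_le_div_of_nonneg_right hm.1 hG0.le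
        _ ≤ Real.log M / scG M := by
            apply div_le_div_of_nonneg_left _ (by linarith) h3
            apply Real.log_nonneg
            exact_mod_cast hm.2.2
    have h5 : (Real.log (κ/2) + Real.log m - scL m) / scG m
        = Real.log (κ/2) * (1/scG m) + scL m - scL m * (1 / scG m) := by
      have : Real.log m = scL m * scG m := by unfold scL; field_simp
      rw [this]; field_simp
    rw [h5] at h2
    have h6 : (1+e) * (Real.log (κ/2) * (1/scG m) + scL m - scL m * (1 / scG m)) ≤ (1+e) * scL m' :=
      mul_le_mul_of_nonneg_left h2 (by linarith)
    have h7 : -|Real.log (κ/2)| ≤ Real.log (κ/2) * (1/scG m) := by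
      have a1 : |Real.log (κ/2) * (1/scG m)| ≤ |Real.log (κ/2)| := by
        rw [abs_mul]
        have : |1 / scG m| ≤ 1 := by
          rw [abs_of_pos (by positivity), div_le_one hG0]; exact hG
        exact mul_le_of_le_one_right (abs_nonneg _) this
      linarith [neg_abs_le (Real.log (κ/2) * (1/scG m))]
    have h8 : scL m * ((1+e) * (1 / scG m)) ≤ scL m * (e/2) := mul_le_mul_of_nonneg_left hc hL0
    have h9 : |Real.log K| + (1+e)*|Real.log (κ/2)| ≤ (e/2) * scL m := by
      calc |Real.log K| + (1+e)*|Real.log (κ/2)|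
          = (e/2) * ((2 / e) * (|Real.log K| + (1+e)*|Real.log (κ/2)|)) := by field_simp
        _ ≤ _ := by gcongr
    have h10 := le_abs_self (Real.log K)
    nlinarith
  calc K * scS m ≤ K * Real.exp (scL m) := by gcongr; exact scS_le m
    _ = Real.exp (Real.log K + scL m) := by rw [Real.exp_add, Real.exp_log hK]
    _ ≤ _ := Real.exp_le_exp.2 key

/-- lower counting property -/
lemma scale_lower (c e : ℝ) (hc : 0 < c) (he : 0 < e) : ∀ᶠ m : ℕ in atTop,
    intScale1 4 2 m (1 - e) ≤ (⌊c * scS m⌋₊ : ℕ) := by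
  filter_upwards [eventually_ge_atTop 1, scL_tendsto.eventually_ge_atTop 0,
    scL_tendsto.eventually_ge_atTop ((Real.log (c+2) - Real.log c) / e), 
    (Real.tendsto_exp_atTop.comp scL_tendsto).eventually_ge_atTop (2/c+2)] with m hm h0 h1 h2
  rw [intScale_eq hm]
  have a1 : Real.exp (scL m) - 1 ≤ scS m := (Nat.sub_one_lt_floor _).le
  have a2 : c * scS m - 1 ≤ (⌊c * scS m⌋₊ : ℕ) := (Nat.sub_one_lt_floor _).le
  simp only [Function.comp] at h2
  set E := Real.exp (scL m) with hE
  have a3 : Real.exp ((1 - e) * scL m) * Real.exp (e * scL m) = E := by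
    rw [← Real.exp_add]; congr 1; ring
  have a4 : (c+2)/c ≤ Real.exp (e * scL m) := by
    rw [← Real.exp_log (show (0:ℝ) < (c+2)/c by positivity), Real.log_div (by positivity) hc.ne']
    apply Real.exp_le_exp.2
    rw [div_le_iff₀ he] at h1
    linarith
  have a5 : 1 ≤ E := by rw [hE]; exact Real.one_le_exp h0
  have a6 : c * (E - 1) ≤ c * scS m := by gcongr
  have p : 0 < Real.exp ((1 - e) * scL m) := Real.exp_pos _
  set X := Real.exp ((1 - e) * scL m)
  have a7 : X * ((c+2)/c) ≤ E := by rw [← a3]; gcongr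
  have a8 : X * (c+2) ≤ E * c := by
    calc X * (c+2) = X * ((c+2)/c) * c := by field_simp
      _ ≤ _ := by gcongr
  have a9 : 2 + 2 * c ≤ E * c := by
    have := mul_le_mul_of_nonneg_right h2 hc.le
    field_simp at this
    linarith
  have : X * (c + 2) ≤ (c * E - c - 1) * (c+2) := by
    nlinarith
  have := le_of_mul_le_mul_right this (by linarith)
  linarith

lemma scS_div_tendsto : Tendsto (fun m : ℕ => (scS m : ℝ) / m) atTop (𝓝 0) := by
  rw [Metric.tendsto_atTop]
  intro η hη
  obtain ⟨N, hN⟩ := eventually_atTop.1 (((scM_tendsto (min η 1 / 2) (by positivity)).eventually_ge_atTop 1).and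
    ((scS_nat_tendsto.eventually_ge_atTop 1).and (eventually_ge_atTop 1)))
  refine ⟨N, fun m hm => ?_⟩
  obtain ⟨h1, h2, h3⟩ := hN m hm
  have hS0 : (0:ℝ) < scS m := by exact_mod_cast h2
  have hm0 : (0:ℝ) < m := by exact_mod_cast h3
  rw [Nat.one_le_floor_iff, le_div_iff₀ hS0] at h1
  rw [dist_zero_right, Real.norm_of_nonneg (by positivity), div_lt_iff₀ hm0]
  have := min_le_left η 1
  nlinarith

end

section
open MeasureTheory Filter Set
open scoped Topology ENNReal NNReal ContDiff

/-! ### Torus and lifts -/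

/-- integer vector -/
def iv (a b : ℤ) : ℝ × ℝ := ((a:ℝ), (b:ℝ))

def Equi (F : ℝ × ℝ → ℝ × ℝ) : Prop := ∀ z a b, F (z + iv a b) = F z + iv a b

lemma coe_eq_iff {x y : ℝ} : (x : Torus1) = (y : Torus1) ↔ ∃ a : ℤ, y = x + a := by
  rw [eq_comm, QuotientAddGroup.eq_iff_sub_mem, AddSubgroup.mem_zmultiples_iff]
  constructor
  · rintro ⟨k, hk⟩
    exact ⟨k, by simp at hk; linarith⟩
  · rintro ⟨k, hk⟩
    exact ⟨k, by simp [hk]⟩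

lemma coe_int_add (x : ℝ) (a : ℤ) : ((x + a : ℝ) : Torus1) = x := by
  rw [eq_comm, coe_eq_iff]; exact ⟨a, rfl⟩

lemma torusProj_iv (z : ℝ × ℝ) (a b : ℤ) : torusProj (z + iv a b) = torusProj z := by
  unfold torusProj iv
  exact Prod.ext (coe_int_add z.1 a) (coe_int_add z.2 b)

lemma torusProj_eq_iff {z w : ℝ × ℝ} : torusProj z = torusProj w ↔ ∃ a b, w = z + iv a b := by
  constructor
  · intro h
    unfold torusProj at h
    rw [Prod.mk.injEq, coe_eq_iff, coe_eq_iff] at h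
    obtain ⟨⟨a, ha⟩, ⟨b, hb⟩⟩ := h
    exact ⟨a, b, Prod.ext ha hb⟩
  · rintro ⟨a, b, rfl⟩
    exact (torusProj_iv z a b).symm

lemma torusProj_quot : IsOpenQuotientMap torusProj := by
  have h : IsOpenQuotientMap (fun x : ℝ => (x : Torus1)) := QuotientAddGroup.isOpenQuotientMap_mk
  exact h.prodMap h

lemma torusProj_surj : Function.Surjective torusProj := torusProj_quot.surjective

lemma torusProj_cont : Continuous torusProj := torusProj_quot.continuous

lemma dist_coe (x y : ℝ) : dist (x : Torus1) (y : Torus1) = ‖((x - y : ℝ) : Torus1)‖ := by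
  rw [dist_eq_norm]; rfl

lemma dist_coe_le (x y : ℝ) : dist (x : Torus1) (y : Torus1) ≤ |x - y| := by
  rw [dist_coe, AddCircle.norm_eq]
  simpa using round_le (x - y) 0

lemma dist_coe_eq {x y : ℝ} (h : |x - y| ≤ 1/2) : dist (x : Torus1) (y : Torus1) = |x - y| := by
  rw [dist_coe, AddCircle.norm_coe_eq_abs_iff 1 one_ne_zero]
  simpa using h

lemma dist_proj_le (z w : ℝ × ℝ) : dist (torusProj z) (torusProj w) ≤ ‖z - w‖ := by
  rw [Prod.dist_eq, Prod.norm_def]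
  exact max_le_max (dist_coe_le _ _) (dist_coe_le _ _)

lemma dist_proj_eq {z w : ℝ × ℝ} (h : ‖z - w‖ ≤ 1/2) :
    dist (torusProj z) (torusProj w) = ‖z - w‖ := by
  rw [Prod.norm_def] at h
  rw [Prod.dist_eq, Prod.norm_def]
  congr 1
  · exact dist_coe_eq ((le_max_left _ _).trans h)
  · exact dist_coe_eq ((le_max_right _ _).trans h)

lemma exists_coe_dist (x y : ℝ) : ∃ a : ℤ, |x + a - y| = dist (x : Torus1) (y : Torus1) := by
  refine ⟨- round (x - y), ?_⟩
  rw [dist_coe, AddCircle.norm_eq]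
  congr 1
  push_cast
  simp
  ring

lemma exists_lift_dist (p : Torus2) (w : ℝ × ℝ) :
    ∃ z, torusProj z = p ∧ ‖z - w‖ = dist p (torusProj w) := by
  obtain ⟨z, rfl⟩ := torusProj_surj p
  obtain ⟨a, ha⟩ := exists_coe_dist z.1 w.1
  obtain ⟨b, hb⟩ := exists_coe_dist z.2 w.2
  refine ⟨z + iv a b, torusProj_iv _ _ _, ?_⟩
  rw [Prod.dist_eq, Prod.norm_def]
  unfold torusProj
  rw [← ha, ← hb]
  rfl

lemma exists_cube (z : ℝ × ℝ) : ∃ z₀ ∈ Icc (0 : ℝ × ℝ) 1, ∃ a b, z = z₀ + iv a b := by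
  refine ⟨(Int.fract z.1, Int.fract z.2), ⟨⟨Int.fract_nonneg _, Int.fract_nonneg _⟩,
    ⟨(Int.fract_lt_one _).le, (Int.fract_lt_one _).le⟩⟩, ⌊z.1⌋, ⌊z.2⌋, ?_⟩
  exact Prod.ext (Int.fract_add_floor _).symm (Int.fract_add_floor _).symm

lemma periodic_bdd {E : Type*} [NormedAddCommGroup E] {g : ℝ × ℝ → E} (hg : Continuous g)
    (hp : ∀ z a b, g (z + iv a b) = g z) : ∃ C : ℝ, 0 < C ∧ ∀ z, ‖g z‖ ≤ C := by
  obtain ⟨C, hC⟩ := (isCompact_Icc (a := (0 : ℝ × ℝ)) (b := 1)).exists_bound_of_continuousOn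
    hg.continuousOn
  refine ⟨max C 1, by positivity, fun z => ?_⟩
  obtain ⟨z₀, hz, a, b, rfl⟩ := exists_cube z
  rw [hp]
  exact (hC _ hz).trans (le_max_left _ _)

lemma Equi.disp_bdd {F : ℝ × ℝ → ℝ × ℝ} (h : Equi F) (hF : Continuous F) :
    ∃ C : ℝ, 0 < C ∧ ∀ z, ‖F z - z‖ ≤ C :=
  periodic_bdd (hF.sub continuous_id) (fun z a b => by simp only [h z a b]; abel)

lemma Equi.lip {F : ℝ × ℝ → ℝ × ℝ} (h : Equi F) (hF : ContDiff ℝ ∞ F) :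
    ∃ K : ℝ, 1 ≤ K ∧ ∀ z w, ‖F z - F w‖ ≤ K * ‖z - w‖ := by
  obtain ⟨C, hC0, hC⟩ := periodic_bdd (hF.continuous_fderiv (by simp)) (fun z a b => by
    rw [← fderiv_comp_add_right]
    simp_rw [h _ a b]
    rw [fderiv_add_const])
  refine ⟨max C 1, le_max_right _ _, fun z w => ?_⟩
  lift C to ℝ≥0 using hC0.le
  have h1 : LipschitzWith C F :=
    lipschitzWith_of_nnnorm_fderiv_le (hF.differentiable (by simp)) (fun x => by
      have := hC x
      exact_mod_cast this)
  have h2 := h1.dist_le_mul z w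
  rw [dist_eq_norm, dist_eq_norm] at h2
  refine h2.trans ?_
  gcongr
  exact le_max_left _ _

lemma Equi.comp {F G : ℝ × ℝ → ℝ × ℝ} (hF : Equi F) (hG : Equi G) : Equi (fun z => F (G z)) := by
  intro z a b
  show F (G (z + iv a b)) = F (G z) + iv a b
  rw [hG z a b, hF]

/-- torus map induced by a lift -/
noncomputable def desc (F : ℝ × ℝ → ℝ × ℝ) : Torus2 → Torus2 :=
  fun p => torusProj (F (Function.surjInv torusProj_surj p))

lemma desc_proj {F : ℝ × ℝ → ℝ × ℝ} (h : Equi F) (z : ℝ × ℝ) :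
    desc F (torusProj z) = torusProj (F z) := by
  unfold desc
  have h1 := Function.surjInv_eq torusProj_surj (torusProj z)
  obtain ⟨a, b, hab⟩ := torusProj_eq_iff.1 h1
  conv_rhs => rw [hab]
  rw [h, torusProj_iv]

lemma desc_cont {F : ℝ × ℝ → ℝ × ℝ} (h : Equi F) (hF : Continuous F) : Continuous (desc F) := by
  rw [torusProj_quot.isQuotientMap.continuous_iff]
  have : desc F ∘ torusProj = torusProj ∘ F := by
    ext1 z; exact desc_proj h z
  rw [this]
  exact torusProj_cont.comp hF

lemma torus_ext {f g : Torus2 → Torus2} (h : ∀ z, f (torusProj z) = g (torusProj z)) : f = g := by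
  ext1 p
  obtain ⟨z, rfl⟩ := torusProj_surj p
  exact h z

lemma desc_comp {F G : ℝ × ℝ → ℝ × ℝ} (hF : Equi F) (hG : Equi G) :
    desc (fun z => F (G z)) = desc F ∘ desc G := by
  apply torus_ext
  intro z
  rw [desc_proj (hF.comp hG), Function.comp, desc_proj hG, desc_proj hF]

lemma desc_iterate {F : ℝ × ℝ → ℝ × ℝ} (hF : Equi F) (i : ℕ) (z : ℝ × ℝ) :
    (desc F)^[i] (torusProj z) = torusProj (F^[i] z) := by
  induction i generalizing z with
  | zero => rfl
  | succ k ih => rw [Function.iterate_succ_apply, Function.iterate_succ_apply, desc_proj hF, ih]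

/-! ### Smooth dependence on parameters -/

lemma iteratedFDeriv_param {E F G : Type*} [NormedAddCommGroup E] [NormedSpace ℝ E]
    [NormedAddCommGroup F] [NormedSpace ℝ F] [NormedAddCommGroup G] [NormedSpace ℝ G]
    (f : E → F → G) (hf : ContDiff ℝ ∞ (Function.uncurry f)) (j : ℕ) :
    ContDiff ℝ ∞ (fun p : E × F => iteratedFDeriv ℝ j (f p.1) p.2) := by
  induction j with
  | zero =>
    have : (fun p : E × F => iteratedFDeriv ℝ 0 (f p.1) p.2) =
      fun p : E × F => (continuousMultilinearCurryFin0 ℝ F G).symm (f p.1 p.2) := by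
      ext1 p
      rw [iteratedFDeriv_zero_eq_comp]; rfl
    rw [this]
    exact (LinearIsometryEquiv.contDiff _).comp hf
  | succ j ih =>
    have : (fun p : E × F => iteratedFDeriv ℝ (j+1) (f p.1) p.2) =
      fun p : E × F => (continuousMultilinearCurryLeftEquiv ℝ (fun _ : Fin (j+1) => F) G).symm
        (fderiv ℝ (iteratedFDeriv ℝ j (f p.1)) p.2) := by
      ext1 p
      rw [iteratedFDeriv_succ_eq_comp_left]; rfl
    rw [this]
    have hL : ContDiff ℝ ∞ (continuousMultilinearCurryLeftEquiv ℝ (fun _ : Fin (j+1) => F) G).symm :=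
      LinearIsometryEquiv.contDiff (𝕜 := ℝ) (E := F →L[ℝ] F [×j]→L[ℝ] G)
        (F := F [×(j+1)]→L[ℝ] G) _
    refine hL.comp
      (f := fun p : E × F => fderiv ℝ (iteratedFDeriv ℝ j (f p.1)) p.2) ?_
    apply ContDiff.fderiv (m := ∞) (f := fun (p : E × F) y => iteratedFDeriv ℝ j (f p.1) y)
      (g := fun p => p.2)
    · have h2 : ContDiff ℝ ∞ (fun q : (E × F) × F => ((q.1.1, q.2) : E × F)) := by fun_prop
      exact ih.comp h2
    · fun_prop
    · simp

lemma param_small {E : Type*} [NormedAddCommGroup E] [NormedSpace ℝ E]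
    (f : E → ℝ × ℝ → ℝ × ℝ) (hf : ContDiff ℝ ∞ (Function.uncurry f))
    (hp : ∀ c z a b, f c (z + iv a b) = f c z) (h0 : ∀ z, f 0 z = 0) (k : ℕ) (η : ℝ) (hη : 0 < η) :
    ∃ κ > 0, ∀ c, ‖c‖ < κ → ∀ j ≤ k, ∀ z, ‖iteratedFDeriv ℝ j (f c) z‖ ≤ η := by
  have key : ∀ j, ∀ᶠ c in 𝓝 (0:E), ∀ z, ‖iteratedFDeriv ℝ j (f c) z‖ ≤ η := by
    intro j
    have h1 := (iteratedFDeriv_param f hf j).continuous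
    have h2 : ∀ᶠ c in 𝓝 (0:E), ∀ z ∈ Icc (0 : ℝ × ℝ) 1, ‖iteratedFDeriv ℝ j (f c) z‖ < η := by
      apply (isCompact_Icc).eventually_forall_of_forall_eventually
      intro z _
      apply h1.norm.continuousAt.eventually_lt_const
      have : f 0 = fun _ => 0 := funext h0
      simp [this, hη]
    filter_upwards [h2] with c hc z
    obtain ⟨z₀, hz, a, b, rfl⟩ := exists_cube z
    rw [← iteratedFDeriv_comp_add_right]
    simp_rw [hp]
    exact (hc _ hz).le
  have key2 : ∀ᶠ c in 𝓝 (0:E), ∀ j ∈ Finset.range (k+1), ∀ z, ‖iteratedFDeriv ℝ j (f c) z‖ ≤ η := by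
    rw [Finset.eventually_all]
    exact fun j _ => key j
  obtain ⟨κ, hκ, h⟩ := Metric.eventually_nhds_iff.1 key2
  refine ⟨κ, hκ, fun c hc j hj => h (by simpa using hc) j (by simp; omega)⟩

end

section
open MeasureTheory Filter Set
open scoped Topology ENNReal NNReal ContDiff

/-! ### Building blocks -/

lemma exists_theta (ε : ℝ) (hε : 0 < ε) : ∃ θ : ℝ → ℝ, ContDiff ℝ ∞ θ ∧
    (∀ t (k : ℤ), θ (t + k) = θ t) ∧ (∀ t, |θ t| ≤ 1) ∧ ∀ t, ε ≤ t → t ≤ 1 - ε → θ t = t := by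
  let φ : ℝ → ℝ := fun t => t * Real.smoothTransition (2 * (1 - t) / ε - 1) *
    Real.smoothTransition (2 * t / ε - 1)
  have hφ : ContDiff ℝ ∞ φ := by
    have h := Real.smoothTransition.contDiff (n := ⊤)
    apply ContDiff.mul
    · apply ContDiff.mul contDiff_id
      exact h.comp (by fun_prop)
    · exact h.comp (by fun_prop)
  have z1 : ∀ t, t ≤ ε/2 → φ t = 0 := by
    intro t ht
    simp only [φ]
    rw [Real.smoothTransition.zero_of_nonpos (x := 2 * t / ε - 1), mul_zero]
    rw [sub_nonpos, div_le_one hε]; linarith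
  have z2 : ∀ t, 1 - ε/2 ≤ t → φ t = 0 := by
    intro t ht
    simp only [φ]
    rw [Real.smoothTransition.zero_of_nonpos (x := 2 * (1-t) / ε - 1), mul_zero, zero_mul]
    rw [sub_nonpos, div_le_one hε]; linarith
  refine ⟨fun t => φ (Int.fract t), ?_, fun t k => by simp, ?_, ?_⟩
  · rw [contDiff_iff_contDiffAt]
    intro t
    by_cases h : Int.fract t = 0
    · have : (fun t => φ (Int.fract t)) =ᶠ[𝓝 t] fun _ => 0 := by
        have ht : t = ⌊t⌋ := by rw [Int.fract] at h; linarith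
        have : Ioo (t - min (ε/2) 1) (t + min (ε/2) 1) ∈ 𝓝 t := Ioo_mem_nhds (by
          have : 0 < min (ε/2) 1 := by positivity
          linarith) (by
          have : 0 < min (ε/2) 1 := by positivity
          linarith)
        filter_upwards [this] with s hs
        have a1 := min_le_left (ε/2) 1
        have a2 := min_le_right (ε/2) 1
        by_cases hst : t ≤ s
        · apply z1
          have : ⌊s⌋ = ⌊t⌋ := by
            rw [Int.floor_eq_iff]
            constructor
            · linarith
            · linarith [hs.2]
          rw [Int.fract, this]
          linarith [hs.2]
        · apply z2
          have : ⌊s⌋ = ⌊t⌋ - 1 := by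
            rw [Int.floor_eq_iff]
            push_cast
            constructor
            · linarith [hs.1]
            · linarith
          rw [Int.fract, this]
          push_cast
          linarith [hs.1]
      exact contDiffAt_const.congr_of_eventuallyEq this
    · have : (fun t => φ (Int.fract t)) =ᶠ[𝓝 t] fun s => φ (s - ⌊t⌋) := by
        have h1 : (⌊t⌋ : ℝ) < t := by
          have := Int.fract_nonneg t
          rw [Int.fract] at *
          rcases this.lt_or_eq with h2 | h2
          · linarith
          · exact absurd h2.symm h
        filter_upwards [Ioo_mem_nhds h1 (Int.lt_floor_add_one t)] with s hs
        have : ⌊s⌋ = ⌊t⌋ := by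
          rw [Int.floor_eq_iff]
          exact ⟨hs.1.le, hs.2⟩
        rw [Int.fract, this]
      refine ContDiffAt.congr_of_eventuallyEq ?_ this
      exact (hφ.comp (by fun_prop : ContDiff ℝ ∞ fun s : ℝ => s - ⌊t⌋)).contDiffAt
  · intro t
    simp only [φ]
    have h1 := Int.fract_nonneg t
    have h2 := (Int.fract_lt_one t).le
    rw [abs_mul, abs_mul, abs_of_nonneg h1, abs_of_nonneg (Real.smoothTransition.nonneg _),
      abs_of_nonneg (Real.smoothTransition.nonneg _)]
    exact mul_le_one₀ (mul_le_one₀ h2 (Real.smoothTransition.nonneg _)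
      (Real.smoothTransition.le_one _)) (Real.smoothTransition.nonneg _)
      (Real.smoothTransition.le_one _)
  · intro t h1 h2
    have : Int.fract t = t := Int.fract_eq_self.2 ⟨by linarith, by linarith⟩
    simp only [this, φ]
    rw [Real.smoothTransition.one_of_one_le, Real.smoothTransition.one_of_one_le]
    · ring
    · rw [le_sub_iff_add_le, le_div_iff₀ hε]; linarith
    · rw [le_sub_iff_add_le, le_div_iff₀ hε]; linarith

/-- quasi-rotation -/
noncomputable def Am (θ : ℝ → ℝ) (a : ℕ) (s : ℝ) (z : ℝ × ℝ) : ℝ × ℝ :=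
  (z.1 - s * θ (z.2 - a * z.1) / a, z.2 - s * θ (z.2 - a * z.1))

noncomputable def Bm (q : ℕ) (S : ℝ) (z : ℝ × ℝ) : ℝ × ℝ :=
  (z.1, z.2 + S * Real.cos (2 * Real.pi * q * z.1))

lemma Am_u {θ : ℝ → ℝ} {a : ℕ} (ha : 0 < a) (s : ℝ) (z : ℝ × ℝ) :
    (Am θ a s z).2 - a * (Am θ a s z).1 = z.2 - a * z.1 := by
  unfold Am
  have : (a:ℝ) ≠ 0 := by positivity
  field_simp
  ring

lemma Am_inv {θ : ℝ → ℝ} {a : ℕ} (ha : 0 < a) (s : ℝ) (z : ℝ × ℝ) :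
    Am θ a (-s) (Am θ a s z) = z := by
  have h := Am_u (θ := θ) ha s z
  rw [Am, h]
  unfold Am
  ext1 <;> simp only <;> ring

lemma Am_smooth {θ : ℝ → ℝ} (hθ : ContDiff ℝ ∞ θ) (a : ℕ) (s : ℝ) : ContDiff ℝ ∞ (Am θ a s) := by
  have h : ContDiff ℝ ∞ (fun z : ℝ × ℝ => θ (z.2 - a * z.1)) := hθ.comp (by fun_prop)
  unfold Am
  apply ContDiff.prodMk
  · exact contDiff_fst.sub ((contDiff_const.mul h).div_const _)
  · exact contDiff_snd.sub (contDiff_const.mul h)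

lemma Am_shift {θ : ℝ → ℝ} (hθ : ∀ t (k : ℤ), θ (t + k) = θ t) (a : ℕ) (s : ℝ) (z : ℝ × ℝ)
    (β : ℝ) (b : ℤ) (hβ : ∃ k : ℤ, a * β = k) : Am θ a s (z + (β, (b:ℝ))) = Am θ a s z + (β, (b:ℝ)) := by
  obtain ⟨k, hk⟩ := hβ
  have : θ ((z + (β, (b:ℝ))).2 - a * (z + (β, (b:ℝ))).1) = θ (z.2 - a * z.1) := by
    rw [← hθ (z.2 - a * z.1) (b - k)]
    congr 1
    push_cast
    simp only [Prod.fst_add, Prod.snd_add]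
    linear_combination -hk
  unfold Am
  rw [this]
  ext1 <;> simp only [Prod.fst_add, Prod.snd_add] <;> ring

lemma Am_equi {θ : ℝ → ℝ} (hθ : ∀ t (k : ℤ), θ (t + k) = θ t) (a : ℕ) (s : ℝ) :
    Equi (Am θ a s) := by
  intro z c d
  exact Am_shift hθ a s z c d ⟨a * c, by push_cast; ring⟩

lemma Bm_inv (q : ℕ) (S : ℝ) (z : ℝ × ℝ) : Bm q (-S) (Bm q S z) = z := by
  unfold Bm
  ext1 <;> simp

lemma Bm_smooth (q : ℕ) (S : ℝ) : ContDiff ℝ ∞ (Bm q S) := by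
  unfold Bm
  fun_prop

lemma cos_shift (q : ℕ) (x β : ℝ) (h : ∃ k : ℤ, q * β = k) :
    Real.cos (2 * Real.pi * q * (x + β)) = Real.cos (2 * Real.pi * q * x) := by
  obtain ⟨k, hk⟩ := h
  rw [← Real.cos_add_int_mul_two_pi (2 * Real.pi * q * x) k]
  congr 1
  linear_combination 2 * Real.pi * hk

lemma Bm_equi (q : ℕ) (S : ℝ) : Equi (Bm q S) := by
  intro z c d
  unfold Bm iv
  ext1
  · rfl
  · simp only [Prod.fst_add, Prod.snd_add]
    rw [cos_shift q z.1 c ⟨q * c, by push_cast; ring⟩]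
    ring

/-! measure preservation -/

lemma vol_eq : (volume : Measure Torus2) = (volume : Measure Torus1).prod volume := rfl

lemma shear_mp (f : Torus1 → Torus1) (hf : Continuous f) :
    MeasurePreserving (fun p : Torus2 => ((p.1, p.2 + f p.1) : Torus2)) volume volume := by
  rw [vol_eq]
  refine MeasurePreserving.skew_product (f := id) (g := fun x y => y + f x)
    (MeasurePreserving.id _) ?_ ?_
  · apply Continuous.measurable
    show Continuous (fun p : Torus2 => p.2 + f p.1)
    fun_prop
  · exact Eventually.of_forall fun x => (measurePreserving_add_right volume (f x)).map_eq

lemma shear_mp' (f : Torus1 → Torus1) (hf : Continuous f) :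
    MeasurePreserving (fun p : Torus2 => ((p.1 + f p.2, p.2) : Torus2)) volume volume := by
  have h := shear_mp f hf
  have hs : MeasurePreserving (Prod.swap : Torus2 → Torus2) volume volume :=
    Measure.measurePreserving_swap
  exact hs.comp (h.comp hs)

lemma exists_circle_lift (f : ℝ → ℝ) (hf : Continuous f) (hp : ∀ t (k : ℤ), f (t + k) = f t) :
    ∃ g : Torus1 → Torus1, Continuous g ∧ ∀ t : ℝ, g (t : Torus1) = (f t : Torus1) := by
  have hper : Function.Periodic (fun t => (f t : Torus1)) 1 := by
    intro t
    have := hp t 1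
    push_cast at this
    simp [this]
  refine ⟨hper.lift, ?_, fun t => rfl⟩
  have hq : IsOpenQuotientMap (fun x : ℝ => (x : Torus1)) := QuotientAddGroup.isOpenQuotientMap_mk
  rw [hq.isQuotientMap.continuous_iff]
  exact (continuous_quotient_mk'.comp hf)

lemma Bm_mp (q : ℕ) (S : ℝ) : MeasurePreserving (desc (Bm q S)) volume volume := by
  obtain ⟨g, hg, hgf⟩ := exists_circle_lift (fun t => S * Real.cos (2 * Real.pi * q * t))
    (by fun_prop) (fun t k => by rw [cos_shift q t k ⟨q * k, by push_cast; ring⟩])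
  have : desc (Bm q S) = fun p : Torus2 => ((p.1, p.2 + g p.1) : Torus2) := by
    apply torus_ext
    intro z
    rw [desc_proj (Bm_equi q S)]
    unfold torusProj Bm
    simp only [hgf]
    rfl
  rw [this]
  exact shear_mp g hg

lemma V_mp (a : ℤ) :
    MeasurePreserving (fun p : Torus2 => ((p.1, p.2 + a • p.1) : Torus2)) volume volume :=
  shear_mp (fun x => a • x) (continuous_zsmul a)

lemma Am_mp {θ : ℝ → ℝ} (hθ : ContDiff ℝ ∞ θ) (hp : ∀ t (k : ℤ), θ (t + k) = θ t) {a : ℕ}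
    (ha : 0 < a) (s : ℝ) : MeasurePreserving (desc (Am θ a s)) volume volume := by
  obtain ⟨g, hg, hgf⟩ := exists_circle_lift (fun t => - (s * θ t / a))
    (by have := hθ.continuous; fun_prop) (fun t k => by rw [hp])
  have : desc (Am θ a s) = (fun p : Torus2 => ((p.1, p.2 + (a:ℤ) • p.1) : Torus2)) ∘
      (fun p : Torus2 => ((p.1 + g p.2, p.2) : Torus2)) ∘
      (fun p : Torus2 => ((p.1, p.2 + (-a:ℤ) • p.1) : Torus2)) := by
    apply torus_ext
    intro z
    rw [desc_proj (Am_equi hp a s)]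
    have e1 : ∀ (k : ℤ) (x : ℝ), k • (x : Torus1) = ((k * x : ℝ) : Torus1) := by
      intro k x
      rw [← AddCircle.coe_zsmul]; simp
    have e2 : ∀ x y : ℝ, (x : Torus1) + (y : Torus1) = ((x + y : ℝ) : Torus1) := fun x y => rfl
    have ha' : (a:ℝ) ≠ 0 := by positivity
    unfold torusProj Am
    simp only [Function.comp, e1, e2, hgf]
    ext1
    · simp only; congr 1; push_cast; ring_nf
    · simp only; congr 1; push_cast; field_simp; ring_nf
  rw [this]
  exact (V_mp _).comp ((shear_mp' g hg).comp (V_mp _))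

/-- `A` squeezes most of a vertical circle. -/
lemma Am_squeeze {θ : ℝ → ℝ} (hp : ∀ t (k : ℤ), θ (t + k) = θ t) {a : ℕ}
    (ha : 0 < a) {ε : ℝ} (hε : 0 < ε) (hθ : ∀ t, ε ≤ t → t ≤ 1 - ε → θ t = t) (z : ℝ × ℝ)
    (hz : ((z.2 - a * z.1 : ℝ) : Torus1) ∉ Metric.closedBall (0 : Torus1) ε) :
    ∃ w, torusProj (Am θ a 1 z) = torusProj w ∧ ‖w - (z.1, a * z.1)‖ ≤ 1 / a := by
  set u := z.2 - a * z.1 with hu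
  have hf := Int.fract_add_floor u
  set k := ⌊u⌋
  set v := Int.fract u with hv
  have hv0 : 0 ≤ v := Int.fract_nonneg u
  have hv1 : v < 1 := Int.fract_lt_one u
  have ha' : (0:ℝ) < a := by positivity
  have hn : ε < ‖((v : ℝ) : Torus1)‖ := by
    rw [Metric.mem_closedBall, dist_zero_right, not_le] at hz
    rwa [← hf, coe_int_add] at hz
  have h0 : (0 : Torus1) = ((0:ℝ) : Torus1) := rfl
  have h1 : ε < v := by
    have := dist_coe_le v 0
    rw [← h0, dist_zero_right, sub_zero, abs_of_nonneg hv0] at this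
    linarith
  have h2 : v ≤ 1 - ε := by
    have h3 := dist_coe_le (v + ((-1 : ℤ) : ℝ)) 0
    rw [coe_int_add, ← h0, dist_zero_right, sub_zero, abs_of_nonpos (by push_cast; linarith)] at h3
    push_cast at h3
    linarith
  have hθu : θ u = v := by
    rw [← hf, hp, hθ v h1.le h2]
  refine ⟨(z.1 - v / a, a * z.1), ?_, ?_⟩
  · rw [torusProj_eq_iff]
    refine ⟨0, -k, ?_⟩
    unfold Am iv
    rw [← hu, hθu]
    ext1
    · simp
    · simp; linarith
  · rw [Prod.norm_def]
    simp only [Prod.fst_sub, Prod.snd_sub, sub_self, norm_zero]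
    apply max_le _ (by positivity)
    rw [sub_right_comm, sub_self, zero_sub, norm_neg, Real.norm_of_nonneg (by positivity)]
    gcongr

end

section
open MeasureTheory Filter Set
open scoped Topology ENNReal NNReal ContDiff

/-! ### Estimates for one step -/

lemma abs_cos_sub_cos (a b : ℝ) : |Real.cos a - Real.cos b| ≤ |a - b| := by
  have h := Real.lipschitzWith_cos.dist_le_mul a b
  simpa [Real.dist_eq] using h

lemma norm_pair_le (x y : ℝ) : ‖((x, y) : ℝ × ℝ)‖ ≤ |x| + |y| := by
  rw [Prod.norm_def]
  apply max_le
  · simp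
  · simp

lemma Bm_lip (q : ℕ) {S : ℝ} (hS : 0 ≤ S) (z w : ℝ × ℝ) :
    ‖Bm q S z - Bm q S w‖ ≤ |z.2 - w.2| + (1 + 2 * Real.pi * q * S) * |z.1 - w.1| := by
  have h1 : Bm q S z - Bm q S w = (z.1 - w.1, (z.2 - w.2) +
      S * (Real.cos (2 * Real.pi * q * z.1) - Real.cos (2 * Real.pi * q * w.1))) := by
    unfold Bm
    ext1 <;> simp only [Prod.fst_sub, Prod.snd_sub]
    ring
  rw [h1]
  refine (norm_pair_le _ _).trans ?_
  have h2 := abs_add_le (z.2 - w.2)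
    (S * (Real.cos (2 * Real.pi * q * z.1) - Real.cos (2 * Real.pi * q * w.1)))
  have h3 := abs_cos_sub_cos (2 * Real.pi * q * z.1) (2 * Real.pi * q * w.1)
  rw [← mul_sub, abs_mul, abs_of_nonneg (by positivity : 0 ≤ 2 * Real.pi * q)] at h3
  rw [abs_mul S, abs_of_nonneg hS] at h2
  have h4 := mul_le_mul_of_nonneg_left h3 hS
  nlinarith

/-- displacement after conjugating a translation by the shear -/
noncomputable def wv (q : ℕ) (S t : ℝ) (z : ℝ × ℝ) : ℝ × ℝ :=
  (t, S * (Real.cos (2 * Real.pi * q * (z.1 + t)) - Real.cos (2 * Real.pi * q * z.1)))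

lemma wv_norm (q : ℕ) {S : ℝ} (hS : 1 ≤ S) (t : ℝ) (z : ℝ × ℝ) :
    ‖wv q S t z‖ ≤ (1 + 2 * Real.pi * q) * (S * |t|) := by
  unfold wv
  refine (norm_pair_le _ _).trans ?_
  have h3 := abs_cos_sub_cos (2 * Real.pi * q * (z.1 + t)) (2 * Real.pi * q * z.1)
  rw [← mul_sub, abs_mul, abs_of_nonneg (by positivity : 0 ≤ 2 * Real.pi * q),
    add_sub_cancel_left] at h3
  rw [abs_mul, abs_of_nonneg (by linarith : 0 ≤ S)]
  have h4 := mul_le_mul_of_nonneg_left h3 (by linarith : 0 ≤ S)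
  have := abs_nonneg t
  nlinarith

/-- finite-dimensional parametrisation of `wv` -/
noncomputable def Wc (q : ℕ) (c : ℝ × ℝ × ℝ) (z : ℝ × ℝ) : ℝ × ℝ :=
  (c.1, c.2.1 * Real.cos (2 * Real.pi * q * z.1) + c.2.2 * Real.sin (2 * Real.pi * q * z.1))

noncomputable def cpar (q : ℕ) (S t : ℝ) : ℝ × ℝ × ℝ :=
  (t, S * (Real.cos (2 * Real.pi * q * t) - 1), - (S * Real.sin (2 * Real.pi * q * t)))

lemma wv_eq (q : ℕ) (S t : ℝ) (z : ℝ × ℝ) : wv q S t z = Wc q (cpar q S t) z := by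
  unfold wv Wc cpar
  ext1
  · rfl
  · simp only
    rw [mul_add, Real.cos_add]
    ring

lemma cpar_norm (q : ℕ) {S : ℝ} (hS : 1 ≤ S) (t : ℝ) :
    ‖cpar q S t‖ ≤ (1 + 2 * Real.pi * q) * (S * |t|) := by
  have hpi := Real.pi_pos
  have h3 := abs_cos_sub_cos (2 * Real.pi * q * t) 0
  rw [Real.cos_zero, sub_zero, abs_mul, abs_of_nonneg (by positivity : 0 ≤ 2 * Real.pi * q)] at h3
  have h5 : |Real.sin (2 * Real.pi * q * t)| ≤ 2 * Real.pi * q * |t| := by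
    have := Real.abs_sin_le_abs (x := 2 * Real.pi * q * t)
    rwa [abs_mul (2 * Real.pi * q), abs_of_nonneg (by positivity : 0 ≤ 2 * Real.pi * q)] at this
  have ht := abs_nonneg t
  have h6 : |t| ≤ S * |t| := le_mul_of_one_le_left ht hS
  have h7 : 0 ≤ S * |t| := by positivity
  have h8 : 0 ≤ 2 * Real.pi * q * (S * |t|) := by positivity
  unfold cpar
  rw [Prod.norm_def, Prod.norm_def]
  simp only [Real.norm_eq_abs, abs_neg]
  rw [abs_mul, abs_mul, abs_of_nonneg (by linarith : 0 ≤ S)]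
  apply max_le
  · nlinarith
  · apply max_le
    · calc S * |Real.cos (2 * Real.pi * q * t) - 1| ≤ S * (2 * Real.pi * q * |t|) := by gcongr
        _ ≤ _ := by nlinarith
    · calc S * |Real.sin (2 * Real.pi * q * t)| ≤ S * (2 * Real.pi * q * |t|) := by gcongr
        _ ≤ _ := by nlinarith

lemma Bm_conj (q : ℕ) (S α t : ℝ) (h : ∃ k : ℤ, q * α = k) (z : ℝ × ℝ) :
    Bm q S (Bm q (-S) z + (α + t, 0)) = z + wv q S t z + (α, 0) := by
  unfold Bm wv
  ext1
  · simp only [Prod.fst_add]; ring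
  · simp only [Prod.fst_add, Prod.snd_add]
    have : z.1 + (α + t) = (z.1 + t) + α := by ring
    rw [this, cos_shift q _ α h]
    ring

/-- two nearby orbits get separated -/
lemma separation (P : ℝ × ℝ → ℝ × ℝ) (hP : Continuous P) (K C : ℝ)
    (hK : ∀ z w, ‖P z - P w‖ ≤ K * ‖z - w‖) (hC : ∀ z, ‖P z - z‖ ≤ C)
    (q : ℕ) (hq : 0 < q) (S X Y : ℝ) (hS : 0 < S) (h1 : (2 * C + 1) / S ≤ Y - X)
    (hXY : 0 < Y - X)
    (h2 : (Y - X) ≤ 1 / (2 * q)) (h3 : K * (Y - X) ≤ 1/4) :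
    ∃ t, 0 ≤ t ∧ t < 1 ∧ ‖P (Bm q S (Y + t, 0)) - P (Bm q S (X + t, 0))‖ = 1/4 := by
  have hpi := Real.pi_pos
  have hq0 : (0:ℝ) < q := by exact_mod_cast hq
  set f : ℝ → ℝ := fun t => ‖P (Bm q S (Y + t, 0)) - P (Bm q S (X + t, 0))‖ with hf
  have hB : Continuous (Bm q S) := (Bm_smooth q S).continuous
  have hfc : Continuous f := by
    have a1 : Continuous fun t : ℝ => Bm q S (Y + t, 0) := hB.comp (by fun_prop)
    have a2 : Continuous fun t : ℝ => Bm q S (X + t, 0) := hB.comp (by fun_prop)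
    exact ((hP.comp a1).sub (hP.comp a2)).norm
  set mid := (X + Y) / 2 with hmid
  have hD : ∀ t, Bm q S (Y + t, 0) - Bm q S (X + t, 0) = (Y - X,
      - (2 * S * Real.sin (2 * Real.pi * q * (t + mid)) * Real.sin (Real.pi * q * (Y - X)))) := by
    intro t
    unfold Bm
    ext1
    · simp
    · simp only [Prod.snd_sub, zero_add]
      rw [← mul_sub, Real.cos_sub_cos]
      have e1 : (2 * Real.pi * q * (Y + t) + 2 * Real.pi * q * (X + t)) / 2
        = 2 * Real.pi * q * (t + mid) := by rw [hmid]; ring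
      have e2 : (2 * Real.pi * q * (Y + t) - 2 * Real.pi * q * (X + t)) / 2
        = Real.pi * q * (Y - X) := by ring
      rw [e1, e2]; ring
  -- time with small difference
  have hf0 : f (Int.fract (-mid)) ≤ 1/4 := by
    have e : Int.fract (-mid) + mid = ((-⌊-mid⌋ : ℤ) : ℝ) := by
      rw [Int.fract]; push_cast; ring
    have hs : Real.sin (2 * Real.pi * q * (Int.fract (-mid) + mid)) = 0 := by
      rw [e, Real.sin_eq_zero_iff]
      exact ⟨2 * q * (-⌊-mid⌋), by push_cast; ring⟩
    refine (hK _ _).trans ?_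
    rw [hD, hs]
    simp only [mul_zero, zero_mul, neg_zero]
    rw [Prod.norm_def]
    simp only [norm_zero, Real.norm_eq_abs, abs_of_pos hXY]
    rwa [max_eq_left hXY.le]
  have hf1 : 1/4 ≤ f (Int.fract (1/(4*q) - mid)) := by
    set t := Int.fract (1/(4*q) - mid) with ht
    have e : t + mid = 1/(4*q) + ((-⌊1/(4*(q:ℝ)) - mid⌋ : ℤ) : ℝ) := by
      rw [ht, Int.fract]; push_cast; ring
    have hs : Real.sin (2 * Real.pi * q * (t + mid)) = 1 := by
      rw [Real.sin_eq_one_iff]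
      refine ⟨q * (-⌊1/(4*(q:ℝ)) - mid⌋), ?_⟩
      rw [e]
      push_cast
      field_simp
      ring
    have h4 : 2 * C + 1 ≤ 2 * S * Real.sin (Real.pi * q * (Y - X)) := by
      have h5 : 2 / Real.pi * (Real.pi * q * (Y - X)) ≤ Real.sin (Real.pi * q * (Y - X)) := by
        apply Real.mul_le_sin (by positivity)
        rw [le_div_iff₀ (by positivity)] at h2
        nlinarith
      have h6 : 2 / Real.pi * (Real.pi * q * (Y - X)) = 2 * q * (Y - X) := by field_simp
      rw [h6] at h5
      rw [div_le_iff₀ hS] at h1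
      have h7 : (1:ℝ) ≤ q := by exact_mod_cast hq
      have h8 : 0 < (Y - X) * S := by positivity
      nlinarith
    set z := Bm q S (Y + t, 0)
    set w := Bm q S (X + t, 0)
    have h9 : 2 * C + 1 ≤ ‖z - w‖ := by
      rw [hD t, hs, Prod.norm_def]
      refine le_trans ?_ (le_max_right _ _)
      simp only [mul_one, norm_neg, Real.norm_eq_abs]
      exact h4.trans (le_abs_self _)
    have h10 : ‖z - w‖ ≤ ‖P z - P w‖ + ‖P z - z‖ + ‖P w - w‖ := by
      have : z - w = (P z - P w) - (P z - z) + (P w - w) := by abel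
      rw [this]
      exact (norm_add_le _ _).trans (by gcongr; exact norm_sub_le _ _)
    have := hC z
    have := hC w
    show 1/4 ≤ ‖P z - P w‖
    linarith
  have := intermediate_value_uIcc (a := Int.fract (-mid)) (b := Int.fract (1/(4*q) - mid))
    hfc.continuousOn
  obtain ⟨t, ht, hft⟩ := this (show (1/4:ℝ) ∈ _ by
    rw [mem_uIcc]; exact Or.inl ⟨hf0, hf1⟩)
  have a0 := Int.fract_nonneg (-mid)
  have a1 := Int.fract_lt_one (-mid)
  have b0 := Int.fract_nonneg (1/(4*(q:ℝ)) - mid)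
  have b1 := Int.fract_lt_one (1/(4*(q:ℝ)) - mid)
  rw [mem_uIcc] at ht
  refine ⟨t, ?_, ?_, hft⟩
  · rcases ht with h | h
    · exact a0.trans h.1
    · exact b0.trans h.1
  · rcases ht with h | h
    · exact h.2.trans_lt b1
    · exact h.2.trans_lt a1

end

section
open MeasureTheory Filter Set
open scoped Topology ENNReal NNReal ContDiff

/-! ### The pieces of one inductive step -/

lemma tau_formula (P Q : ℝ × ℝ → ℝ × ℝ) (q : ℕ) (S α t : ℝ) (hα : ∃ k : ℤ, q * α = k) (i : ℤ)
    (z : ℝ × ℝ) : P (Bm q S (Bm q (-S) (Q z) + (i * (α + t), 0))) =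
      P (Q z + wv q S (i * t) (Q z) + (i * α, 0)) := by
  rw [mul_add, Bm_conj]
  obtain ⟨k, hk⟩ := hα
  exact ⟨i * k, by push_cast; rw [← hk]; ring⟩

lemma Wc_periodic (q : ℕ) (c : ℝ × ℝ × ℝ) (z : ℝ × ℝ) (a b : ℤ) :
    Wc q c (z + iv a b) = Wc q c z := by
  unfold Wc iv
  have h : 2 * Real.pi * q * (z.1 + a) = 2 * Real.pi * q * z.1 + ((q * a : ℤ) : ℝ) * (2 * Real.pi) := by
    push_cast; ring
  simp only [Prod.fst_add]
  rw [h, Real.cos_add_int_mul_two_pi, Real.sin_add_int_mul_two_pi]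

lemma smooth_small {P Q : ℝ × ℝ → ℝ × ℝ} (hP : ContDiff ℝ ∞ P) (hQ : ContDiff ℝ ∞ Q)
    (eP : Equi P) (eQ : Equi Q) (q : ℕ) (α : ℝ) (k : ℕ) (η : ℝ) (hη : 0 < η) :
    ∃ κ > 0, ∀ c, ‖c‖ < κ → ∀ j ≤ k, ∀ z, ‖iteratedFDeriv ℝ j
      (fun z => P (Q z + Wc q c (Q z) + (α, 0)) - P (Q z + (α, 0))) z‖ ≤ η := by
  refine param_small (fun c z => P (Q z + Wc q c (Q z) + (α, 0)) - P (Q z + (α, 0))) ?_ ?_ ?_ k η hη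
  · unfold Function.uncurry
    have h1 : ContDiff ℝ ∞ (fun p : (ℝ × ℝ × ℝ) × (ℝ × ℝ) => Q p.2) := hQ.comp contDiff_snd
    have h2 : ContDiff ℝ ∞ (fun p : (ℝ × ℝ × ℝ) × (ℝ × ℝ) => Wc q p.1 (Q p.2)) := by
      unfold Wc; fun_prop
    exact (hP.comp ((h1.add h2).add contDiff_const)).sub (hP.comp (h1.add contDiff_const))
  · intro c z a b
    rw [eQ, Wc_periodic]
    have e1 : Q z + iv a b + Wc q c (Q z) + (α, 0) = Q z + Wc q c (Q z) + (α, 0) + iv a b := by abel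
    have e2 : Q z + iv a b + (α, 0) = Q z + (α, 0) + iv a b := by abel
    rw [e1, e2, eP, eP]; abel
  · intro z
    have : Wc q 0 (Q z) = 0 := by unfold Wc; simp
    simp [this]

lemma upper_grid {P Q : ℝ × ℝ → ℝ × ℝ} (eP : Equi P) (hPQ : ∀ z, P (Q z) = z) (hQP : ∀ z, Q (P z) = z)
    (K : ℝ) (hK1 : 1 ≤ K) (hK : ∀ z w, ‖P z - P w‖ ≤ K * ‖z - w‖) (q : ℕ) (e : ℝ) (he : 0 < e) :
    ∃ C > 0, ∀ S : ℕ, 1 ≤ S → ∃ Z : Finset (ℝ × ℝ), (Z.card : ℝ) ≤ C * S ∧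
      ∀ w, ∃ z ∈ Z, ∀ β : ℝ, dist (torusProj (P (Bm q S (Bm q (-S) (Q z) + (β, 0)))))
        (torusProj (P (Bm q S (Bm q (-S) (Q w) + (β, 0))))) ≤ e := by
  have hpi := Real.pi_pos
  obtain ⟨k, hk⟩ := exists_nat_gt (K * (2 + 2 * Real.pi * q) / e)
  have hk0 : (0:ℝ) < k := lt_of_le_of_lt (by positivity) hk
  have hk0' : 0 < k := by exact_mod_cast hk0
  rw [div_lt_iff₀ he] at hk
  refine ⟨(k:ℝ)^2, by positivity, fun S hS => ?_⟩
  have hS0 : (1:ℝ) ≤ S := by exact_mod_cast hS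
  classical
  refine ⟨((Finset.range (k * S)) ×ˢ (Finset.range k)).image
    (fun p => P (Bm q S ((p.1:ℝ) / (k * S), (p.2:ℝ) / k))), ?_, fun w => ?_⟩
  · have := Finset.card_image_le (s := (Finset.range (k * S)) ×ˢ (Finset.range k))
      (f := fun p : ℕ × ℕ => P (Bm q S ((p.1:ℝ) / (k * S), (p.2:ℝ) / k)))
    rw [Finset.card_product, Finset.card_range, Finset.card_range] at this
    calc _ ≤ ((k * S * k : ℕ) : ℝ) := by exact_mod_cast this
      _ = _ := by push_cast; ring
  · set u := Bm q (-S) (Q w) with hu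
    have grid : ∀ (N : ℕ), 0 < N → ∀ x : ℝ, ∃ i < N, ∃ a : ℤ, |x - a - (i:ℝ)/N| ≤ 1 / N := by
      intro N hN x
      have hN' : (0:ℝ) < N := by exact_mod_cast hN
      refine ⟨⌊Int.fract x * N⌋₊, ?_, ⌊x⌋, ?_⟩
      · rw [Nat.floor_lt (by have := Int.fract_nonneg x; positivity)]
        exact mul_lt_of_lt_one_left hN' (Int.fract_lt_one x)
      · have h0 : 0 ≤ Int.fract x * N := by have := Int.fract_nonneg x; positivity
        have h1 := Nat.floor_le h0
        have h2 := Nat.lt_floor_add_one (Int.fract x * N)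
        have : x - ⌊x⌋ = Int.fract x := rfl
        rw [this, abs_le]
        constructor
        · have : ((⌊Int.fract x * N⌋₊ : ℕ) : ℝ) / N ≤ Int.fract x := by rwa [div_le_iff₀ hN']
          have : 0 ≤ 1 / (N:ℝ) := by positivity
          linarith
        · rw [sub_le_iff_le_add, ← add_div, le_div_iff₀ hN']; linarith
    obtain ⟨i, hi, a, ha⟩ := grid (k * S) (by positivity) u.1
    obtain ⟨j, hj, b, hb⟩ := grid k hk0' u.2
    push_cast at ha
    refine ⟨P (Bm q S ((i:ℝ) / (k * S), (j:ℝ) / k)), ?_, fun β => ?_⟩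
    · rw [Finset.mem_image]
      exact ⟨(i, j), by simp [hi, hj], rfl⟩
    · rw [hQP, Bm_inv]
      have e1 : u + (β, 0) = (u.1 - a + β, u.2 - b) + iv a b := by
        unfold iv; ext1 <;> simp
        ring
      rw [e1, Bm_equi, eP, torusProj_iv]
      refine (dist_proj_le _ _).trans ?_
      refine (hK _ _).trans ?_
      have hl := Bm_lip q (S := S) (by positivity) (((i:ℝ) / (k * S), (j:ℝ) / k) + (β, 0)) (u.1 - a + β, u.2 - b)
      simp only [Prod.fst_add, Prod.snd_add, add_zero] at hl
      rw [add_sub_add_right_eq_sub, abs_sub_comm, abs_sub_comm ((i:ℝ) / (k * S))] at hl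
      have hl2 : |u.2 - b - (j:ℝ)/k| + (1 + 2 * Real.pi * q * S) * |u.1 - a - (i:ℝ) / (k * S)| ≤
          1 / k + (1 + 2 * Real.pi * q * S) * (1 / (k * S)) := by gcongr
      have hl3 : 1 / k + (1 + 2 * Real.pi * q * S) * (1 / (k * S)) ≤ (2 + 2 * Real.pi * q) / (k:ℝ) := by
        have : 1 / k + (1 + 2 * Real.pi * q * S) * (1 / (k * S)) = (1 + 2 * Real.pi * q + 1 / S) / (k:ℝ) := by
          field_simp; ring
        rw [this]
        apply div_le_div_of_nonneg_right _ hk0.le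
        have : 1 / (S:ℝ) ≤ 1 := by rw [div_le_one (by positivity)]; exact hS0
        linarith
      calc _ ≤ K * ((2 + 2 * Real.pi * q) / (k:ℝ)) := by
            apply mul_le_mul_of_nonneg_left _ (by linarith)
            exact hl.trans (hl2.trans hl3)
        _ ≤ e := by
            rw [← mul_div_assoc, div_le_iff₀ hk0]; linarith

lemma lower_sep {P Q : ℝ × ℝ → ℝ × ℝ} (eP : Equi P) (hP : Continuous P) (hQP : ∀ z, Q (P z) = z)
    (K : ℝ) (hK1 : 1 ≤ K) (hK : ∀ z w, ‖P z - P w‖ ≤ K * ‖z - w‖) (q : ℕ) (hq : 0 < q)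
    (α : ℝ) (hα : ∃ k : ℤ, q * α = k) :
    ∃ c : ℝ, 0 < c ∧ ∀ S : ℕ, 1 ≤ S → ∀ m : ℕ, 1 ≤ m → 2 * K * (1 + 2 * Real.pi * q * S) * q / m ≤ 1/16 →
      ∃ f : ℕ → ℝ × ℝ, ∀ j j', j < j' → j' < ⌊c * S⌋₊ → ∃ i < m, 3/16 ≤
        dist (torusProj (P (Bm q S (Bm q (-S) (Q (f j)) + (i * (α + 1 / m), 0)))))
        (torusProj (P (Bm q S (Bm q (-S) (Q (f j')) + (i * (α + 1 / m), 0))))) := by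
  have hpi := Real.pi_pos
  obtain ⟨C, hC0, hC⟩ := eP.disp_bdd hP
  have hq' : (0:ℝ) < q := by exact_mod_cast hq
  have hK0 : 0 < K := by linarith
  set ρ := min (1 / (2 * q : ℝ)) (1 / (4 * K)) with hρ
  have hρ0 : 0 < ρ := by positivity
  have hD : 0 < 2 * C + 1 := by positivity
  refine ⟨ρ / (2 * C + 1), by positivity, fun S hS m hm hsm => ?_⟩
  have hS0 : (0:ℝ) < S := by exact_mod_cast hS
  have hm0 : (0:ℝ) < m := by exact_mod_cast hm
  refine ⟨fun j => P (Bm q S (j * (2 * C + 1) / S, 0)), fun j j' hjj hj' => ?_⟩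
  set X : ℝ := j * (2 * C + 1) / S with hX
  set Y : ℝ := j' * (2 * C + 1) / S with hY
  have hYX : Y - X = (j' - j : ℝ) * ((2 * C + 1) / S) := by rw [hX, hY]; ring
  have hj1 : (1:ℝ) ≤ (j' - j : ℝ) := by
    have : (j:ℝ) + 1 ≤ j' := by exact_mod_cast hjj
    linarith
  have h1 : (2 * C + 1) / S ≤ Y - X := by
    rw [hYX]; exact le_mul_of_one_le_left (by positivity) hj1
  have hXY : 0 < Y - X := lt_of_lt_of_le (by positivity) h1
  have h2 : Y - X ≤ ρ := by
    have : (j':ℝ) ≤ ρ / (2 * C + 1) * S := by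
      have := Nat.floor_le (a := ρ / (2 * C + 1) * S) (by positivity)
      have h3 : (j':ℝ) ≤ (⌊ρ / (2 * C + 1) * S⌋₊ : ℕ) := by exact_mod_cast hj'.le
      linarith
    have hj0 : (0:ℝ) ≤ j := by positivity
    calc Y - X ≤ (ρ / (2 * C + 1) * S) * ((2 * C + 1) / S) := by
          rw [hYX]; gcongr; linarith
      _ = ρ := by field_simp
  obtain ⟨t, ht0, ht1, ht⟩ := separation P hP K C hK hC q hq S X Y hS0 h1 hXY
    (h2.trans (min_le_left _ _)) (by
      calc K * (Y - X) ≤ K * (1 / (4 * K)) := by gcongr; exact h2.trans (min_le_right _ _)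
        _ = 1 / 4 := by field_simp)
  set l := ⌊t * m / q⌋₊ with hl
  have hl1 : (l:ℝ) ≤ t * m / q := Nat.floor_le (by positivity)
  have hl2 : t * m / q < l + 1 := Nat.lt_floor_add_one _
  rw [le_div_iff₀ hq'] at hl1
  rw [div_lt_iff₀ hq'] at hl2
  refine ⟨q * l, ?_, ?_⟩
  · have : ((q * l : ℕ) : ℝ) < m := by
      push_cast
      calc (q:ℝ) * l ≤ t * m := by linarith
        _ < m := mul_lt_of_lt_one_left hm0 ht1
    exact_mod_cast this
  obtain ⟨k, hk⟩ := hα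
  set i := q * l with hi
  have hiα : (i:ℝ) * (α + 1 / m) = i / m + ((l * k : ℤ) : ℝ) := by
    rw [hi]; push_cast; rw [← hk]; ring
  have hterr : |i / m - t| ≤ q / (m:ℝ) := by
    rw [hi, abs_le]; push_cast
    constructor
    · rw [neg_le_sub_iff_le_add, ← add_div, le_div_iff₀ hm0]; nlinarith
    · have : (q:ℝ) * l / m ≤ t := by rw [div_le_iff₀ hm0]; linarith
      have : 0 ≤ q / (m:ℝ) := by positivity
      linarith
  have hrep : ∀ x : ℝ, torusProj (P (Bm q S (Bm q (-S) (Q (P (Bm q S (x, 0)))) + (i * (α + 1 / m), 0)))) =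
      torusProj (P (Bm q S (x + i / m, 0))) := by
    intro x
    rw [hQP, Bm_inv, hiα]
    have : ((x, 0) : ℝ × ℝ) + (i / m + ((l * k : ℤ) : ℝ), 0) = (x + i / m, 0) + iv (l * k) 0 := by
      unfold iv; ext1 <;> simp
      ring
    rw [this, Bm_equi, eP, torusProj_iv]
  have hclose : ∀ x : ℝ, ‖P (Bm q S (x + i / m, 0)) - P (Bm q S (x + t, 0))‖ ≤ 1/32 := by
    intro x
    refine (hK _ _).trans ?_
    have hb := Bm_lip q (S := S) hS0.le (x + i / m, 0) (x + t, 0)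
    simp only [sub_self, abs_zero, zero_add, add_sub_add_left_eq_sub] at hb
    calc _ ≤ K * ((1 + 2 * Real.pi * q * S) * (q / m)) := by
          apply mul_le_mul_of_nonneg_left _ hK0.le
          refine hb.trans ?_
          gcongr
      _ = (2 * K * (1 + 2 * Real.pi * q * S) * q / m) / 2 := by ring
      _ ≤ 1 / 32 := by linarith
  simp only
  rw [hrep, hrep]
  set p := P (Bm q S (Y + t, 0))
  set p' := P (Bm q S (X + t, 0))
  have c1 := hclose X
  have c2 := hclose Y
  set r := P (Bm q S (Y + i / m, 0))
  set r' := P (Bm q S (X + i / m, 0))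
  have e1 : r' - r = -(p - p') + (r' - p') - (r - p) := by abel
  have e2 : p - p' = -(r' - r) + (r' - p') - (r - p) := by abel
  have n1 : ‖r' - r‖ ≤ 1/4 + 1/32 + 1/32 := by
    rw [e1]
    refine (norm_sub_le _ _).trans (add_le_add ((norm_add_le _ _).trans (add_le_add ?_ c1)) c2)
    rw [norm_neg, ht]
  have n2 : 1/4 ≤ ‖r' - r‖ + 1/32 + 1/32 := by
    rw [← ht, e2]
    refine (norm_sub_le _ _).trans (add_le_add ((norm_add_le _ _).trans (add_le_add ?_ c1)) c2)
    rw [norm_neg]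
  rw [dist_proj_eq (by linarith)]
  linarith

end

section
open MeasureTheory Filter Set
open scoped Topology ENNReal NNReal ContDiff

/-! ### The inductive step -/

/-- state of the construction -/
structure St where
  F : ℝ × ℝ → ℝ × ℝ
  G : ℝ × ℝ → ℝ × ℝ
  α : ℝ
  q : ℕ
  m : ℕ
  M : ℕ
  r : ℝ

/-- lift of the conjugated translation by `β` -/
def tau (s : St) (β : ℝ) (z : ℝ × ℝ) : ℝ × ℝ := s.F (s.G z + (β, 0))

structure Valid (s : St) : Prop where
  sF : ContDiff ℝ ∞ s.F
  sG : ContDiff ℝ ∞ s.G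
  eF : Equi s.F
  eG : Equi s.G
  FG : ∀ z, s.F (s.G z) = z
  GF : ∀ z, s.G (s.F z) = z
  q0 : 0 < s.q
  qα : ∃ k : ℤ, s.q * s.α = k
  r0 : 0 < s.r
  mF : MeasurePreserving (desc s.F) volume volume
  mG : MeasurePreserving (desc s.G) volume volume
  m1 : 1 ≤ s.m

structure Step (n : ℕ) (s s' : St) : Prop where
  smooth : ∀ σ : ℤ, (σ = 1 ∨ σ = -1) → ∀ j ≤ n, ∀ z, ‖iteratedFDeriv ℝ j
    (fun z => tau s' (σ * s'.α) z - tau s (σ * s.α) z) z‖ ≤ (1/2)^n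
  close : ∀ i : ℕ, i ≤ s'.M → ∀ z, ‖tau s' (i * s'.α) z - tau s (i * s.α) z‖ ≤ (1/2)^n/100
  mM : s.m ≤ s'.M
  MM : s.M < s'.M
  upper : ∃ Z : Finset (ℝ × ℝ), (∀ w, ∃ z ∈ Z, ∀ β, dist (torusProj (tau s' β z))
    (torusProj (tau s' β w)) ≤ 1/(n+1)) ∧ ∀ m, s'.M ≤ m → (Z.card : ℝ) ≤ intScale1 4 2 m (1 + 1/(n+1))
  lower : ∃ (N : ℕ) (f : ℕ → ℝ × ℝ), intScale1 4 2 s'.m (1 - 1/(n+1)) ≤ N ∧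
    ∀ j j', j < j' → j' < N → ∃ i < s'.m, 3/16 ≤
      dist (torusProj (tau s' (i * s'.α) (f j))) (torusProj (tau s' (i * s'.α) (f j')))
  αα : s'.α = s.α + 1 / s'.m
  mm : 2 * s.m ≤ s'.m
  qm : (n + 1) * s.q ≤ s'.m
  qq : s'.q = s.q * s'.m
  rr : s'.r ≤ s.r / 2
  dψ : ∀ p, dist (desc s'.G p).1 (desc s.G p).1 ≤ s.r
  iso : ∃ c : Torus1 → Torus2, Continuous c ∧
    volume {p | (1/2)^n < dist p (c (desc s'.G p).1)} ≤ ENNReal.ofReal ((1/2)^n) ∧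
    ∀ x x', dist x x' ≤ 2 * s'.r → dist (c x) (c x') ≤ (1/2)^n

lemma coe_nsmul' (a : ℕ) (x : ℝ) : (a : ℤ) • (x : Torus1) = ((a * x : ℝ) : Torus1) := by
  rw [← AddCircle.coe_zsmul]; simp

lemma iso_bad {F : ℝ × ℝ → ℝ × ℝ} (eF : Equi F) {KF : ℝ}
    (hK : ∀ z w, ‖F z - F w‖ ≤ KF * ‖z - w‖) (hK1 : 1 ≤ KF)
    {Q : ℝ × ℝ → ℝ × ℝ} (eQ : Equi Q) (mQ : MeasurePreserving (desc Q) volume volume)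
    {θ : ℝ → ℝ} (hp : ∀ t (k : ℤ), θ (t + k) = θ t) {a : ℕ}
    (ha : 0 < a) {δ : ℝ} (hδ : 0 < δ) (hθ : ∀ t, δ/4 ≤ t → t ≤ 1 - δ/4 → θ t = t)
    (hFQ : ∀ z, F (Am θ a 1 (Q z)) = z) (hKa : KF / a ≤ δ) :
    volume {p | δ < dist p (desc F ((desc Q p).1, (a:ℤ) • (desc Q p).1))} ≤ ENNReal.ofReal δ := by
  set E : Set Torus2 := (fun p : Torus2 => ((p.1, p.2 + (-(a:ℤ)) • p.1) : Torus2)) ⁻¹'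
    (univ ×ˢ Metric.closedBall 0 (δ/4)) with hE
  have hmE : MeasurableSet (univ ×ˢ Metric.closedBall 0 (δ/4) : Set Torus2) :=
    MeasurableSet.univ.prod Metric.isClosed_closedBall.measurableSet
  have hsub : {p | δ < dist p (desc F ((desc Q p).1, (a:ℤ) • (desc Q p).1))} ⊆ (desc Q) ⁻¹' E := by
    intro p hpp
    by_contra hcon
    obtain ⟨z, rfl⟩ := torusProj_surj p
    simp only [Set.mem_ofPred_eq] at hpp
    rw [desc_proj eQ] at hpp
    set ζ := Q z with hζ
    have hnot : ((ζ.2 - a * ζ.1 : ℝ) : Torus1) ∉ Metric.closedBall (0 : Torus1) (δ/4) := by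
      intro hin
      apply hcon
      rw [mem_preimage, desc_proj eQ, hE, mem_preimage]
      refine ⟨mem_univ _, ?_⟩
      show (ζ.2 : Torus1) + (-(a:ℤ)) • (ζ.1 : Torus1) ∈ _
      rw [neg_smul, coe_nsmul', ← sub_eq_add_neg, ← AddCircle.coe_sub]
      exact hin
    obtain ⟨w, hw, hwn⟩ := Am_squeeze hp ha (by positivity) hθ ζ hnot
    have h1 : torusProj z = torusProj (F w) := by
      rw [← hFQ z, ← desc_proj eF, ← hζ, hw, desc_proj eF]
    have h2 : desc F ((torusProj ζ).1, (a:ℤ) • (torusProj ζ).1) = torusProj (F (ζ.1, a * ζ.1)) := by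
      rw [← desc_proj eF]
      congr 1
      show ((ζ.1 : Torus1), (a:ℤ) • (ζ.1 : Torus1)) = _
      rw [coe_nsmul']; rfl
    rw [h1, h2] at hpp
    have h3 := (dist_proj_le (F w) (F (ζ.1, a * ζ.1))).trans (hK _ _)
    have h4 : KF * ‖w - (ζ.1, a * ζ.1)‖ ≤ KF * (1 / a) := by gcongr
    have h5 : KF * (1 / a) = KF / a := by ring
    linarith
  refine (measure_mono hsub).trans ?_
  have hV := V_mp (-(a:ℤ))
  rw [mQ.measure_preimage (hV.measurable hmE).nullMeasurableSet,
    hV.measure_preimage hmE.nullMeasurableSet, vol_eq, Measure.prod_prod, AddCircle.measure_univ, ENNReal.ofReal_one, one_mul,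
    AddCircle.volume_closedBall]
  apply ENNReal.ofReal_le_ofReal
  refine (min_le_right _ _).trans ?_
  linarith

lemma exists_step (n : ℕ) (s : St) (hs : Valid s) : ∃ s', Valid s' ∧ Step n s s' := by
  have hpi := Real.pi_pos
  obtain ⟨F, G, α, q, m, M, r⟩ := s
  obtain ⟨sF, sG, eF, eG, FG, GF, q0, qα, r0, mF, mG, m1⟩ := hs
  simp only at *
  obtain ⟨KF, hKF1, hKF⟩ := eF.lip sF
  set δ : ℝ := (1/2)^n with hδ
  have hδ0 : 0 < δ := by positivity
  obtain ⟨θ, sθ, pθ, bθ, hθ⟩ := exists_theta (δ/4) (by positivity)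
  obtain ⟨a0, ha0⟩ := exists_nat_gt (max (KF / δ) (1 / r))
  have ha00 : (0:ℝ) < a0 := lt_of_le_of_lt (by positivity) ha0
  have ha00' : 0 < a0 := by exact_mod_cast ha00
  have hq1 : (1:ℝ) ≤ q := by exact_mod_cast q0
  set a : ℕ := q * a0 with ha
  have hapos : 0 < a := by positivity
  have haR : (0:ℝ) < a := by exact_mod_cast hapos
  have hage : (a0:ℝ) ≤ a := by
    rw [ha]; push_cast; exact le_mul_of_one_le_left ha00.le hq1
  have hKa : KF / a ≤ δ := by
    rw [div_le_iff₀ haR]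
    have := (le_max_left _ _).trans_lt ha0
    rw [div_lt_iff₀ hδ0] at this
    nlinarith
  have har : 1 / a ≤ r := by
    rw [div_le_iff₀ haR]
    have := (le_max_right _ _).trans_lt ha0
    rw [div_lt_iff₀ r0] at this
    nlinarith
  set P : ℝ × ℝ → ℝ × ℝ := fun z => F (Am θ a 1 z) with hP
  set Q : ℝ × ℝ → ℝ × ℝ := fun z => Am θ a (-1) (G z) with hQ
  have sP : ContDiff ℝ ∞ P := sF.comp (Am_smooth sθ a 1)
  have sQ : ContDiff ℝ ∞ Q := (Am_smooth sθ a (-1)).comp sG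
  have eP : Equi P := eF.comp (Am_equi pθ a 1)
  have eQ : Equi Q := (Am_equi pθ a (-1)).comp eG
  have hAA : ∀ z, Am θ a 1 (Am θ a (-1) z) = z := by
    intro z
    have := Am_inv (θ := θ) hapos (-1) z
    rwa [neg_neg] at this
  have PQ : ∀ z, P (Q z) = z := by intro z; simp only [hP, hQ]; rw [hAA, FG]
  have QP : ∀ z, Q (P z) = z := by intro z; simp only [hP, hQ]; rw [GF, Am_inv hapos]
  have mP : MeasurePreserving (desc P) volume volume := by
    rw [hP, desc_comp eF (Am_equi pθ a 1)]; exact mF.comp (Am_mp sθ pθ hapos 1)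
  have mQ : MeasurePreserving (desc Q) volume volume := by
    rw [hQ, desc_comp (Am_equi pθ a (-1)) eG]; exact (Am_mp sθ pθ hapos (-1)).comp mG
  have hshift : ∀ (i : ℤ) z, P (Q z + (i * α, 0)) = F (G z + (i * α, 0)) := by
    intro i z
    obtain ⟨k, hk⟩ := qα
    have := Am_shift pθ a 1 (Q z) (i * α) 0 ⟨a0 * i * k, by rw [ha]; push_cast; rw [← hk]; ring⟩
    simp only [Int.cast_zero] at this
    simp only [hP]
    rw [this, hQ, hAA]
  obtain ⟨K, hK1, hK⟩ := eP.lip sP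
  have hK0 : 0 < K := by linarith
  obtain ⟨κ1, hκ1, hsm1⟩ := smooth_small sP sQ eP eQ q (((1:ℤ):ℝ) * α) n δ hδ0
  obtain ⟨κ2, hκ2, hsm2⟩ := smooth_small sP sQ eP eQ q (((-1:ℤ):ℝ) * α) n δ hδ0
  have hn0 : (0:ℝ) < 1 / (n + 1) := by positivity
  obtain ⟨CU, hCU, hup⟩ := upper_grid eP PQ QP K hK1 hK q (1/(n+1)) hn0
  obtain ⟨cl, hcl, hlow⟩ := lower_sep eP sP.continuous QP K hK1 hK q q0 α qα
  set W := 1 + 2 * Real.pi * q with hW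
  have hW0 : 0 < W := by positivity
  set κ := min 1 (δ / (100 * K * W)) with hκ
  have hκ0 : 0 < κ := by positivity
  have hdiv : ∀ C > 0, ∀ η > 0, ∀ᶠ m : ℕ in atTop, C * ((scS m : ℝ) / m) < η := by
    intro C hC η hη
    have := scS_div_tendsto.const_mul C
    rw [mul_zero] at this
    exact this.eventually (gt_mem_nhds hη)
  obtain ⟨m', hm1, hu, hl, hS1, hd1, hd2, hd3, hM1, hmm, hqm⟩ := (((eventually_ge_atTop 1).and
    ((scale_upper κ CU (1/(n+1)) hκ0 (min_le_left _ _) hCU hn0).and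
    ((scale_lower cl (1/(n+1)) hcl hn0).and
    ((scS_nat_tendsto.eventually_ge_atTop 1).and
    ((hdiv W hW0 κ1 hκ1).and
    ((hdiv W hW0 κ2 hκ2).and
    ((hdiv (2 * K * (1 + 2 * Real.pi * q) * q) (by positivity) (1/16) (by norm_num)).and
    (((scM_tendsto κ hκ0).eventually_ge_atTop (max m (M+1))).and
    ((eventually_ge_atTop (2 * m)).and (eventually_ge_atTop ((n+1) * q)))))))))))).exists
  set S := scS m' with hS
  have hSR : (1:ℝ) ≤ S := by exact_mod_cast hS1
  have hmR : (1:ℝ) ≤ m' := by exact_mod_cast hm1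
  have hmR0 : (0:ℝ) < m' := by linarith
  set c : Torus1 → Torus2 := fun x => desc F (x, (a:ℤ) • x) with hc
  have cc : Continuous c := (desc_cont eF sF.continuous).comp
    (continuous_id.prodMk (continuous_zsmul (a:ℤ)))
  obtain ⟨ρ, hρ0, hρ⟩ := Metric.uniformContinuous_iff.1
    (CompactSpace.uniformContinuous_of_continuous cc) δ hδ0
  have htau : ∀ (i : ℤ) z, P (Bm q S (Bm q (-S) (Q z) + (i * (α + 1 / m'), 0))) - F (G z + (i * α, 0)) =
      P (Q z + wv q S (i * (1 / m')) (Q z) + (i * α, 0)) - P (Q z + (i * α, 0)) := by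
    intro i z
    rw [tau_formula P Q q S α (1/m') qα, hshift]
  have hfst : ∀ p, (desc (fun z => Bm q (-S) (Q z)) p).1 = (desc Q p).1 := by
    intro p
    obtain ⟨z, rfl⟩ := torusProj_surj p
    rw [desc_proj ((Bm_equi q (-S)).comp eQ), desc_proj eQ]; rfl
  refine ⟨⟨fun z => P (Bm q S z), fun z => Bm q (-S) (Q z), α + 1 / m', q * m', m',
    ⌊κ * m' / S⌋₊, min (r/2) (ρ/3)⟩, ?_, ?_⟩
  · constructor
    · exact sP.comp (Bm_smooth q S)
    · exact (Bm_smooth q (-S)).comp sQ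
    · exact eP.comp (Bm_equi q S)
    · exact (Bm_equi q (-S)).comp eQ
    · intro z
      have := Bm_inv q (-S) (Q z)
      rw [neg_neg] at this
      simp only
      rw [this, PQ]
    · intro z
      simp only
      rw [QP, Bm_inv]
    · exact Nat.mul_pos q0 (by omega)
    · obtain ⟨k, hk⟩ := qα
      refine ⟨m' * k + q, ?_⟩
      push_cast
      rw [← hk]
      field_simp
    · simp only; positivity
    · simp only
      rw [desc_comp eP (Bm_equi q S)]; exact mP.comp (Bm_mp q S)
    · simp only
      rw [desc_comp (Bm_equi q (-S)) eQ]; exact (Bm_mp q (-S)).comp mQ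
    · exact hm1
  · constructor
    · intro σ hσ j hj z
      have hfun : (fun z => tau ⟨fun z => P (Bm q S z), fun z => Bm q (-S) (Q z), α + 1 / m', q * m', m',
        ⌊κ * m' / S⌋₊, min (r/2) (ρ/3)⟩ (σ * (α + 1 / m')) z - tau ⟨F, G, α, q, m, M, r⟩ (σ * α) z) =
        fun z => P (Q z + Wc q (cpar q S (σ * (1 / m'))) (Q z) + (σ * α, 0)) - P (Q z + (σ * α, 0)) := by
        ext1 z
        rw [← wv_eq, ← htau]; rfl
      rw [hfun]
      have hcn := cpar_norm q hSR (σ * (1 / m'))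
      have habs : |(σ:ℝ) * (1 / m')| = 1 / m' := by
        rw [abs_mul, abs_of_pos (by positivity : (0:ℝ) < 1 / m')]
        rcases hσ with rfl | rfl <;> simp
      rw [habs, mul_one_div (S:ℝ)] at hcn
      rcases hσ with rfl | rfl
      · exact hsm1 _ (hcn.trans_lt hd1) j hj z
      · exact hsm2 _ (hcn.trans_lt hd2) j hj z
    · intro i hi z
      simp only at hi
      have h1 : tau ⟨fun z => P (Bm q S z), fun z => Bm q (-S) (Q z), α + 1 / m', q * m', m',
        ⌊κ * m' / S⌋₊, min (r/2) (ρ/3)⟩ (i * (α + 1 / m')) z - tau ⟨F, G, α, q, m, M, r⟩ (i * α) z =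
        P (Q z + wv q S ((i:ℤ) * (1 / m')) (Q z) + ((i:ℤ) * α, 0)) - P (Q z + ((i:ℤ) * α, 0)) := by
        rw [← htau]; rfl
      simp only
      rw [h1]
      refine (hK _ _).trans ?_
      have e1 : Q z + wv q S ((i:ℤ) * (1 / m')) (Q z) + ((i:ℤ) * α, 0) - (Q z + ((i:ℤ) * α, 0)) =
        wv q S ((i:ℤ) * (1 / m')) (Q z) := by abel
      rw [e1]
      have h2 := wv_norm q hSR ((i:ℤ) * (1 / m')) (Q z)
      have h3 : (i:ℝ) ≤ κ * m' / S := (Nat.le_floor_iff (by positivity)).1 hi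
      rw [abs_of_nonneg (by positivity)] at h2
      rw [le_div_iff₀ (by positivity)] at h3
      have h4 : (S:ℝ) * (((i:ℤ):ℝ) * (1 / m')) ≤ κ := by
        have : (S:ℝ) * (((i:ℤ):ℝ) * (1 / m')) = (i * S) / m' := by push_cast; ring
        rw [this, div_le_iff₀ hmR0]; exact h3
      calc K * ‖wv q S ((i:ℤ) * (1 / m')) (Q z)‖ ≤ K * (W * κ) := by
            apply mul_le_mul_of_nonneg_left _ hK0.le
            refine h2.trans ?_
            exact mul_le_mul_of_nonneg_left h4 hW0.le
        _ ≤ K * (W * (δ / (100 * K * W))) := by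
            gcongr; exact min_le_right _ _
        _ = δ / 100 := by field_simp
    · exact (le_max_left _ _).trans hM1
    · exact lt_of_lt_of_le (Nat.lt_succ_self M) ((le_max_right _ _).trans hM1)
    · obtain ⟨Z, hZ, hZ2⟩ := hup S hS1
      refine ⟨Z, hZ2, fun m2 hm2 => hZ.trans (hu m2 hm2)⟩
    · obtain ⟨f, hf⟩ := hlow S hS1 m' hm1 (by
        refine le_trans ?_ hd3.le
        rw [← mul_div_assoc]
        apply div_le_div_of_nonneg_right _ hmR0.le
        have : 2 * K * (1 + 2 * Real.pi * q * S) * q ≤ 2 * K * (S + 2 * Real.pi * q * S) * q := by gcongr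
        linarith)
      exact ⟨_, f, hl, hf⟩
    · rfl
    · exact hmm
    · exact hqm
    · rfl
    · exact min_le_left _ _
    · intro p
      simp only
      rw [hfst]
      obtain ⟨z, rfl⟩ := torusProj_surj p
      rw [desc_proj eQ, desc_proj eG]
      refine (dist_coe_le _ _).trans ?_
      have : (Q z).1 - (G z).1 = θ ((G z).2 - a * (G z).1) / a := by
        simp only [hQ, Am]; ring
      rw [this, abs_div, abs_of_pos haR]
      refine le_trans ?_ har
      gcongr
      exact bθ _
    · refine ⟨c, cc, ?_, ?_⟩
      · simp only
        simp_rw [hfst]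
        exact iso_bad eF hKF hKF1 eQ mQ pθ hapos hδ0 hθ PQ hKa
      · intro x x' hx
        simp only at hx
        refine (hρ (lt_of_le_of_lt hx ?_)).le
        have := min_le_right (r/2) (ρ/3)
        linarith

end

section
open MeasureTheory Filter Set
open scoped Topology ENNReal NNReal ContDiff

/-! ### Passing to the limit -/

lemma exists_seq : ∃ s : ℕ → St, (∀ n, Valid (s n)) ∧ ∀ n, Step n (s n) (s (n+1)) := by
  have h0 : Valid ⟨id, id, 0, 1, 1, 0, 1⟩ := by
    have hd : desc id = id := torus_ext fun z => by
      rw [desc_proj (fun z a b => rfl)]; rfl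
    constructor
    · exact contDiff_id
    · exact contDiff_id
    · exact fun z a b => rfl
    · exact fun z a b => rfl
    · exact fun z => rfl
    · exact fun z => rfl
    · norm_num
    · exact ⟨0, by simp⟩
    · norm_num
    · simp only; rw [hd]; exact MeasurePreserving.id _
    · simp only; rw [hd]; exact MeasurePreserving.id _
    · norm_num
  choose f hf using exists_step
  let S : ℕ → {s : St // Valid s} := fun n => Nat.rec ⟨_, h0⟩
    (fun k s => ⟨f k s.1 s.2, (hf k s.1 s.2).1⟩) n
  exact ⟨fun n => (S n).1, fun n => (S n).2, fun n => (hf n (S n).1 (S n).2).2⟩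

lemma tau_zero {s : St} (hs : Valid s) (z : ℝ × ℝ) : tau s 0 z = z := by
  unfold tau
  have : ((0:ℝ), (0:ℝ)) = (0 : ℝ × ℝ) := rfl
  rw [this, add_zero, hs.FG]

lemma tau_add {s : St} (hs : Valid s) (β γ : ℝ) (z : ℝ × ℝ) : tau s β (tau s γ z) = tau s (β + γ) z := by
  unfold tau
  rw [hs.GF, add_assoc]
  congr 2
  ext1 <;> simp [add_comm]

lemma tau_smooth {s : St} (hs : Valid s) (β : ℝ) : ContDiff ℝ ∞ (tau s β) := hs.sF.comp (hs.sG.add contDiff_const)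

lemma tau_equi {s : St} (hs : Valid s) (β : ℝ) : Equi (tau s β) := by
  intro z a b
  unfold tau
  rw [hs.eG, add_right_comm, hs.eF]

lemma tau_iterate {s : St} (hs : Valid s) (β : ℝ) (i : ℕ) (z : ℝ × ℝ) : (tau s β)^[i] z = tau s (i * β) z := by
  induction i with
  | zero => simp [tau_zero hs]
  | succ k ih =>
    rw [Function.iterate_succ_apply', ih, tau_add hs]; congr 1; push_cast; ring

lemma desc_tau_G {s : St} (hs : Valid s) (β : ℝ) (p : Torus2) :
    (desc s.G (desc (tau s β) p)).1 = (desc s.G p).1 + (β : Torus1) := by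
  obtain ⟨z, rfl⟩ := torusProj_surj p
  rw [desc_proj (tau_equi hs β), desc_proj hs.eG, desc_proj hs.eG]
  unfold tau
  rw [hs.GF]
  rfl

lemma tau_mp {s : St} (hs : Valid s) (β : ℝ) : MeasurePreserving (desc (tau s β)) volume volume := by
  have h := (hs.mF.comp (shear_mp' (fun _ => (β : Torus1)) continuous_const)).comp hs.mG
  convert h using 1
  apply torus_ext
  intro z
  rw [desc_proj (tau_equi hs β)]
  simp only [Function.comp]
  rw [desc_proj hs.eG]
  have : (((torusProj (s.G z)).1 + (β:Torus1), (torusProj (s.G z)).2) : Torus2) =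
      torusProj (s.G z + (β, 0)) := by
    unfold torusProj; ext1 <;> simp
  rw [this, desc_proj hs.eF]; rfl

lemma limit_smooth (f : ℕ → ℝ × ℝ → ℝ × ℝ) (hf : ∀ n, ContDiff ℝ ∞ (f n))
    (h : ∀ n, ∀ j ≤ n, ∀ z, ‖iteratedFDeriv ℝ j (fun z => f (n+1) z - f n z) z‖ ≤ (1/2)^n) :
    ∃ g, ContDiff ℝ ∞ g ∧ ∀ n z, ‖g z - f n z‖ ≤ 2 * (1/2)^n := by
  have hd : ∀ n z, ‖f (n+1) z - f n z‖ ≤ (1/2)^n := fun n z => by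
    simpa using h n 0 (Nat.zero_le _) z
  have hsum : Summable (fun n : ℕ => ((1:ℝ)/2)^n) := summable_geometric_two
  have hsm : ContDiff ℝ ∞ (fun z => ∑' n, (f (n+1) z - f n z)) := by
    refine contDiff_tsum_of_eventually (v := fun _ n => (1/2)^n) (fun n => (hf (n+1)).sub (hf n))
      (fun k hk => hsum) (fun k hk => ?_)
    rw [Nat.cofinite_eq_atTop]
    filter_upwards [eventually_ge_atTop k] with n hn z
    exact h n k hn z
  refine ⟨fun z => f 0 z + ∑' n, (f (n+1) z - f n z), (hf 0).add hsm, fun n z => ?_⟩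
  have hs : Summable (fun n => f (n+1) z - f n z) := Summable.of_norm_bounded hsum (fun n => hd n z)
  have e1 : f 0 z + ∑' n, (f (n+1) z - f n z) - f n z = ∑' k, (f (k+n+1) z - f (k+n) z) := by
    rw [← hs.sum_add_tsum_nat_add n, Finset.sum_range_sub (fun k => f k z)]
    abel
  simp only
  rw [e1]
  have h2 : HasSum (fun k : ℕ => ((1:ℝ)/2)^(k+n)) (2 * (1/2)^n) := by
    have := hasSum_geometric_two.mul_right (((1:ℝ)/2)^n)
    simpa [pow_add] using this
  exact tsum_of_norm_bounded h2 (fun k => hd (k+n) z)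

lemma half_tendsto (C : ℝ) : Tendsto (fun n : ℕ => C * ((1:ℝ)/2)^n) atTop (𝓝 0) := by
  have := (tendsto_pow_atTop_nhds_zero_of_lt_one (by norm_num : (0:ℝ) ≤ 1/2) (by norm_num)).const_mul C
  simpa using this

lemma unif_comp {X Y : Type*} [PseudoMetricSpace X] [PseudoMetricSpace Y] {f : ℕ → X → Y} {g : X → Y}
    (hg : Continuous g) {e : ℕ → ℝ} (he : Tendsto e atTop (𝓝 0)) (h : ∀ n z, dist (g z) (f n z) ≤ e n)
    {x : ℕ → X} {y : X} (hx : Tendsto x atTop (𝓝 y)) : Tendsto (fun n => f n (x n)) atTop (𝓝 (g y)) := by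
  have h1 : Tendsto (fun n => g (x n)) atTop (𝓝 (g y)) := (hg.tendsto y).comp hx
  exact tendsto_of_tendsto_of_dist h1 (squeeze_zero (fun _ => dist_nonneg) (fun n => h n (x n)) he)

instance : IsProbabilityMeasure (volume : Measure Torus1) :=
  ⟨by rw [AddCircle.measure_univ, ENNReal.ofReal_one]⟩

instance : IsProbabilityMeasure (volume : Measure Torus2) := by
  rw [vol_eq]; infer_instance

lemma mp_limit {X Y : Type*} [MeasurableSpace X] [PseudoMetricSpace Y] [MeasurableSpace Y]
    [BorelSpace Y] (μ : Measure X) [IsProbabilityMeasure μ] (ν : Measure Y) [IsProbabilityMeasure ν]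
    (f : ℕ → X → Y) (g : X → Y) (hf : ∀ n, MeasurePreserving (f n) μ ν) (hg : Measurable g)
    (h : ∀ x, Tendsto (fun n => f n x) atTop (𝓝 (g x))) : MeasurePreserving g μ ν := by
  refine ⟨hg, ?_⟩
  have := Measure.isProbabilityMeasure_map (μ := μ) hg.aemeasurable
  apply ext_of_forall_integral_eq_of_IsFiniteMeasure
  intro φ
  rw [integral_map hg.aemeasurable φ.continuous.measurable.aestronglyMeasurable]
  have h1 : Tendsto (fun n => ∫ x, φ (f n x) ∂μ) atTop (𝓝 (∫ x, φ (g x) ∂μ)) := by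
    apply tendsto_integral_of_dominated_convergence (fun _ => ‖φ‖)
    · intro n
      exact (φ.continuous.measurable.comp (hf n).measurable).aestronglyMeasurable
    · exact integrable_const _
    · intro n; exact Eventually.of_forall fun x => φ.norm_coe_le_norm _
    · exact Eventually.of_forall fun x => (φ.continuous.tendsto _).comp (h x)
  have h2 : ∀ n, ∫ x, φ (f n x) ∂μ = ∫ y, φ y ∂ν := by
    intro n
    rw [← (hf n).map_eq, integral_map (hf n).measurable.aemeasurable
      φ.continuous.measurable.aestronglyMeasurable]
  simp_rw [h2] at h1
  exact tendsto_nhds_unique h1 tendsto_const_nhds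

/-- The data of the limit map. -/
lemma exists_limit (s : ℕ → St) (hv : ∀ n, Valid (s n)) (hst : ∀ n, Step n (s n) (s (n+1))) :
    ∃ T U : ℝ × ℝ → ℝ × ℝ, ContDiff ℝ ∞ T ∧ ContDiff ℝ ∞ U ∧ Equi T ∧ Equi U ∧
      (∀ z, T (U z) = z) ∧ (∀ z, U (T z) = z) ∧
      (∀ n z, ‖T z - tau (s n) (s n).α z‖ ≤ 2 * (1/2)^n) ∧
      (∀ n i z, i ≤ (s (n+1)).M → ‖T^[i] z - tau (s n) (i * (s n).α) z‖ ≤ (1/2)^n/50) := by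
  obtain ⟨T, sT, hT⟩ := limit_smooth (fun n => tau (s n) (((1:ℤ):ℝ) * (s n).α))
    (fun n => tau_smooth (hv n) _) (fun n j hj z => (hst n).smooth 1 (Or.inl rfl) j hj z)
  obtain ⟨U, sU, hU⟩ := limit_smooth (fun n => tau (s n) (((-1:ℤ):ℝ) * (s n).α))
    (fun n => tau_smooth (hv n) _) (fun n j hj z => (hst n).smooth (-1) (Or.inr rfl) j hj z)
  simp only [Int.cast_one, one_mul, Int.cast_neg, neg_mul] at hT hU
  have ht := half_tendsto 2
  have pT : ∀ {x : ℕ → ℝ × ℝ} {y}, Tendsto x atTop (𝓝 y) →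
      Tendsto (fun n => tau (s n) (s n).α (x n)) atTop (𝓝 (T y)) := fun hx =>
    unif_comp sT.continuous ht (fun n z => by rw [dist_eq_norm]; exact hT n z) hx
  have pU : ∀ {x : ℕ → ℝ × ℝ} {y}, Tendsto x atTop (𝓝 y) →
      Tendsto (fun n => tau (s n) (-(s n).α) (x n)) atTop (𝓝 (U y)) := fun hx =>
    unif_comp sU.continuous ht (fun n z => by rw [dist_eq_norm]; exact hU n z) hx
  refine ⟨T, U, sT, sU, ?_, ?_, ?_, ?_, hT, ?_⟩
  · intro z a b
    have h1 := pT (tendsto_const_nhds (x := z + iv a b))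
    have h2 := (pT (tendsto_const_nhds (x := z))).add_const (iv a b)
    refine tendsto_nhds_unique h1 (h2.congr fun n => (tau_equi (hv n) _ z a b).symm)
  · intro z a b
    have h1 := pU (tendsto_const_nhds (x := z + iv a b))
    have h2 := (pU (tendsto_const_nhds (x := z))).add_const (iv a b)
    refine tendsto_nhds_unique h1 (h2.congr fun n => (tau_equi (hv n) _ z a b).symm)
  · intro z
    have h1 := pT (pU (tendsto_const_nhds (x := z)))
    refine tendsto_nhds_unique h1 (tendsto_const_nhds.congr fun n => ?_)
    rw [tau_add (hv n), add_neg_cancel, tau_zero (hv n)]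
  · intro z
    have h1 := pU (pT (tendsto_const_nhds (x := z)))
    refine tendsto_nhds_unique h1 (tendsto_const_nhds.congr fun n => ?_)
    rw [tau_add (hv n), neg_add_cancel, tau_zero (hv n)]
  · intro n i z hi
    have hlim : ∀ i : ℕ, Tendsto (fun n => tau (s n) (i * (s n).α) z) atTop (𝓝 (T^[i] z)) := by
      intro i
      induction i with
      | zero => exact tendsto_const_nhds.congr fun n => by simp [tau_zero (hv n)]
      | succ k ih =>
        rw [Function.iterate_succ_apply']
        refine (pT ih).congr fun n => ?_
        rw [tau_add (hv n)]; congr 1; push_cast; ring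
    have hMm : Monotone (fun n => (s n).M) := monotone_nat_of_le_succ fun n => (hst n).MM.le
    have hb : ∀ k, ‖tau (s (n+k)) (i * (s (n+k)).α) z - tau (s n) (i * (s n).α) z‖ ≤
        (1/2)^n/50 - (1/2)^(n+k)/50 := by
      intro k
      induction k with
      | zero => simp
      | succ k ih =>
        have h1 := (hst (n+k)).close i (hi.trans (hMm (by omega : n + 1 ≤ n + k + 1))) z
        have h2 := norm_add_le (tau (s (n+k+1)) (i * (s (n+k+1)).α) z - tau (s (n+k)) (i * (s (n+k)).α) z)
          (tau (s (n+k)) (i * (s (n+k)).α) z - tau (s n) (i * (s n).α) z)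
        rw [sub_add_sub_cancel] at h2
        have h3 : ((1:ℝ)/2)^(n+(k+1)) = (1/2)^(n+k) / 2 := by rw [← add_assoc, pow_succ]; ring
        rw [h3]
        refine h2.trans ?_
        linarith
    have h1 : Tendsto (fun k => tau (s (n+k)) (i * (s (n+k)).α) z) atTop (𝓝 (T^[i] z)) := by
      have h2 := (hlim i).comp (tendsto_add_atTop_nat n)
      refine h2.congr fun k => ?_
      simp only [Function.comp]; rw [add_comm k n]
    have h2 := (h1.sub_const (tau (s n) (i * (s n).α) z)).norm
    refine le_of_tendsto h2 (Eventually.of_forall fun k => (hb k).trans ?_)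
    have : (0:ℝ) ≤ (1/2)^(n+k)/50 := by positivity
    linarith

lemma limit_mp (s : ℕ → St) (hv : ∀ n, Valid (s n)) (T : ℝ × ℝ → ℝ × ℝ) (sT : Continuous T) (eT : Equi T)
    (hT : ∀ n z, ‖T z - tau (s n) (s n).α z‖ ≤ 2 * (1/2)^n) :
    (∀ n p, dist (desc T p) (desc (tau (s n) (s n).α) p) ≤ 2 * (1/2)^n) ∧
    MeasurePreserving (desc T) volume volume := by
  have h1 : ∀ n p, dist (desc T p) (desc (tau (s n) (s n).α) p) ≤ 2 * (1/2)^n := by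
    intro n p
    obtain ⟨z, rfl⟩ := torusProj_surj p
    rw [desc_proj eT, desc_proj (tau_equi (hv n) _)]
    exact (dist_proj_le _ _).trans (hT n z)
  refine ⟨h1, mp_limit _ _ (fun n => desc (tau (s n) (s n).α)) (desc T) (fun n => tau_mp (hv n) _)
    (desc_cont eT sT).measurable fun p => ?_⟩
  exact unif_comp (desc_cont eT sT) (half_tendsto 2) h1 tendsto_const_nhds

end

section
open MeasureTheory Filter Set
open scoped Topology ENNReal NNReal ContDiff

/-! ### The rotation number -/

lemma exists_alpha (s : ℕ → St) (hv : ∀ n, Valid (s n)) (hst : ∀ n, Step n (s n) (s (n+1))) :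
    ∃ α : ℝ, Irrational α ∧ Tendsto (fun n => (s n).α) atTop (𝓝 α) := by
  have hm0 : ∀ n, (0:ℝ) < (s n).m := fun n => by exact_mod_cast (hv n).m1
  have hu : ∀ n, 2 * (1 / ((s (n+1)).m : ℝ)) ≤ 1 / (s n).m := by
    intro n
    have h1 : (2:ℝ) * (s n).m ≤ (s (n+1)).m := by exact_mod_cast (hst n).mm
    rw [mul_one_div, div_le_div_iff₀ (hm0 _) (hm0 _)]
    linarith
  have hstep : ∀ n, (s (n+1)).α = (s n).α + 1 / (s (n+1)).m := fun n => (hst n).αα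
  have hb : ∀ n k, (s (n+1+k)).α ≤ (s n).α + 2 * (1 / (s (n+1)).m) - 1 / (s (n+1+k)).m := by
    intro n k
    induction k with
    | zero => rw [add_zero, hstep]; linarith
    | succ k ih =>
      have h1 := hstep (n+1+k)
      have h2 := hu (n+1+k)
      have e : n + 1 + (k + 1) = n + 1 + k + 1 := by ring
      rw [e, h1]
      linarith
  have hmono : StrictMono (fun n => (s n).α) := strictMono_nat_of_lt_succ fun n => by
    rw [hstep]; have := hm0 (n+1); simp only [lt_add_iff_pos_right]; positivity
  have hbd : ∀ n, (s n).α ≤ (s 0).α + 2 * (1 / (s 1).m) := by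
    intro n
    have h1 := hmono.monotone (by omega : n ≤ 0 + 1 + n)
    have h2 := hb 0 n
    have h3 : 0 < 1 / ((s (0+1+n)).m : ℝ) := by have := hm0 (0+1+n); positivity
    simp only [zero_add] at *
    linarith
  obtain ⟨α, hα⟩ : ∃ α, Tendsto (fun n => (s n).α) atTop (𝓝 α) :=
    ⟨_, tendsto_atTop_ciSup hmono.monotone ⟨_, by rintro _ ⟨n, rfl⟩; exact hbd n⟩⟩
  refine ⟨α, ?_, hα⟩
  have hlt : ∀ n, (s n).α < α := fun n =>
    lt_of_lt_of_le (hmono (Nat.lt_succ_self n)) (hmono.monotone.ge_of_tendsto hα (n+1))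
  have hle : ∀ n, α ≤ (s n).α + 2 * (1 / (s (n+1)).m) := by
    intro n
    refine le_of_tendsto hα ?_
    filter_upwards [eventually_ge_atTop (n+1)] with k hk
    obtain ⟨l, rfl⟩ := Nat.exists_eq_add_of_le hk
    have h2 := hb n l
    have h3 : 0 < 1 / ((s (n+1+l)).m : ℝ) := by have := hm0 (n+1+l); positivity
    linarith
  rintro ⟨x, hx⟩
  have hd : (0:ℝ) < x.den := by exact_mod_cast x.den_pos
  have hx2 : (x.den : ℝ) * α = x.num := by
    rw [← hx]
    have : (x.den : ℚ) * x = x.num := by rw [mul_comm]; exact Rat.mul_den_eq_num x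
    exact_mod_cast this
  obtain ⟨n, hn⟩ := exists_nat_gt (2 * (x.den:ℝ))
  obtain ⟨k, hk⟩ := (hv n).qα
  have hq : (0:ℝ) < (s n).q := by exact_mod_cast (hv n).q0
  have hintg : (x.den : ℝ) * ((s n).q * (α - (s n).α)) = (((s n).q * x.num - x.den * k : ℤ) : ℝ) := by
    push_cast; rw [← hx2, ← hk]; ring
  have hpos : 0 < (x.den : ℝ) * ((s n).q * (α - (s n).α)) := by
    have := sub_pos.2 (hlt n); positivity
  have hlt1 : (x.den : ℝ) * ((s n).q * (α - (s n).α)) < 1 := by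
    have h1 : α - (s n).α ≤ 2 * (1 / (s (n+1)).m) := by linarith [hle n]
    have h2 : ((n:ℝ) + 1) * (s n).q ≤ (s (n+1)).m := by exact_mod_cast (hst n).qm
    calc (x.den : ℝ) * ((s n).q * (α - (s n).α)) ≤ x.den * ((s n).q * (2 * (1 / (s (n+1)).m))) := by gcongr
      _ = (2 * x.den * (s n).q) / (s (n+1)).m := by ring
      _ < 1 := by
        rw [div_lt_one (hm0 _)]
        nlinarith
  rw [hintg] at hpos hlt1
  have a1 : (0:ℤ) < (s n).q * x.num - x.den * k := by exact_mod_cast hpos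
  have a2 : ((s n).q * x.num - x.den * k : ℤ) < 1 := by exact_mod_cast hlt1
  omega

/-! ### The isomorphism -/

lemma exists_psi (s : ℕ → St) (hv : ∀ n, Valid (s n)) (hst : ∀ n, Step n (s n) (s (n+1)))
    (T : Torus2 → Torus2) (α : ℝ) (hα : Tendsto (fun n => (s n).α) atTop (𝓝 α))
    (hT : ∀ n p, dist (T p) (desc (tau (s n) (s n).α) p) ≤ 2 * (1/2)^n) :
    ∃ ψ : Torus2 → Torus1, Continuous ψ ∧ MeasurePreserving ψ volume volume ∧
      (∀ p, ψ (T p) = ψ p + (α : Torus1)) ∧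
      ∃ A0 : Set Torus2, MeasurableSet A0 ∧ volume A0ᶜ = 0 ∧ InjOn ψ A0 := by
  set ψn : ℕ → Torus2 → Torus1 := fun n p => (desc (s n).G p).1 with hψn
  have hr0 : ∀ n, 0 < (s n).r := fun n => (hv n).r0
  have hr : ∀ n, (s n).r ≤ (s 0).r * (1/2)^n := by
    intro n
    induction n with
    | zero => simp
    | succ k ih => have := (hst k).rr; rw [pow_succ]; linarith
  have hd : ∀ n p, dist (ψn (n+1) p) (ψn n p) ≤ (s n).r := fun n p => (hst n).dψ p
  have hex : ∀ p, ∃ x, Tendsto (fun n => ψn n p) atTop (𝓝 x) := by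
    intro p
    apply cauchySeq_tendsto_of_complete
    apply cauchySeq_of_le_geometric (1/2) (s 0).r (by norm_num)
    intro n
    rw [dist_comm]
    exact (hd n p).trans (hr n)
  choose ψ hψ using hex
  have hbk : ∀ n k p, dist (ψn (n+k) p) (ψn n p) ≤ 2 * (s n).r - 2 * (s (n+k)).r := by
    intro n k p
    induction k with
    | zero => simp
    | succ k ih =>
      have h1 := dist_triangle (ψn (n+k+1) p) (ψn (n+k) p) (ψn n p)
      have h2 := hd (n+k) p
      have h3 := (hst (n+k)).rr
      rw [← add_assoc]
      linarith
  have hb : ∀ n p, dist (ψ p) (ψn n p) ≤ 2 * (s n).r := by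
    intro n p
    refine le_of_tendsto ((hψ p).dist tendsto_const_nhds) ?_
    filter_upwards [eventually_ge_atTop n] with k hk
    obtain ⟨l, rfl⟩ := Nat.exists_eq_add_of_le hk
    have := hbk n l p
    have := hr0 (n+l)
    linarith
  have hbt : Tendsto (fun n => 2 * (s n).r) atTop (𝓝 0) :=
    squeeze_zero (g := fun n => 2 * (s 0).r * (1/2)^n) (fun n => by have := hr0 n; positivity)
      (fun n => by have := hr n; linarith) (half_tendsto (2 * (s 0).r))
  have cψn : ∀ n, Continuous (ψn n) := fun n => continuous_fst.comp (desc_cont (hv n).eG (hv n).sG.continuous)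
  have cψ : Continuous ψ := by
    have hu : TendstoUniformly ψn ψ atTop := by
      rw [Metric.tendstoUniformly_iff]
      intro ε hε
      filter_upwards [hbt.eventually (gt_mem_nhds hε)] with n hn p
      exact (hb n p).trans_lt hn
    exact hu.continuous (Frequently.of_forall cψn)
  have mfst : MeasurePreserving (Prod.fst : Torus2 → Torus1) volume volume := by
    rw [vol_eq]; exact measurePreserving_fst
  have mψ : MeasurePreserving ψ volume volume :=
    mp_limit _ _ ψn ψ (fun n => mfst.comp (hv n).mG) cψ.measurable hψ
  have hTt : ∀ p, Tendsto (fun n => desc (tau (s n) (s n).α) p) atTop (𝓝 (T p)) := by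
    intro p
    rw [tendsto_iff_dist_tendsto_zero]
    refine squeeze_zero (fun _ => dist_nonneg) (fun n => ?_) (half_tendsto 2)
    rw [dist_comm]; exact hT n p
  refine ⟨ψ, cψ, mψ, fun p => ?_, ?_⟩
  · have h1 := unif_comp cψ hbt hb (hTt p)
    have h2 : Tendsto (fun n => ψn n p + ((s n).α : Torus1)) atTop (𝓝 (ψ p + (α : Torus1))) :=
      (hψ p).add (((AddCircle.continuous_mk' (1:ℝ)).tendsto α).comp hα)
    refine tendsto_nhds_unique h1 (h2.congr fun n => ?_)
    exact (desc_tau_G (hv n) _ p).symm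
  · choose c cc hc1 hc2 using fun n => (hst n).iso
    have hBC : ∀ᵐ p ∂(volume : Measure Torus2), Tendsto (fun n => c n (ψ p)) atTop (𝓝 p) := by
      have hsum : ∑' n, volume {p | (1/2)^n < dist p (c n (desc (s (n+1)).G p).1)} ≠ ⊤ := by
        refine ne_top_of_le_ne_top ?_ (ENNReal.tsum_le_tsum hc1)
        rw [← ENNReal.ofReal_tsum_of_nonneg (fun n => by positivity) summable_geometric_two]
        exact ENNReal.ofReal_ne_top
      have := ae_eventually_notMem hsum
      filter_upwards [this] with p hp
      rw [tendsto_iff_dist_tendsto_zero]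
      refine squeeze_zero' (Eventually.of_forall fun _ => dist_nonneg) ?_ (half_tendsto 2)
      filter_upwards [hp] with n hn
      have hn' : dist p (c n (desc (s (n+1)).G p).1) ≤ (1/2)^n := not_lt.1 hn
      have h2 := hc2 n (ψ p) (ψn (n+1) p) (hb (n+1) p)
      have h3 := dist_triangle (c n (ψ p)) (c n (ψn (n+1) p)) p
      rw [dist_comm] at hn'
      simp only [hψn] at h2 h3
      linarith
    refine ⟨(toMeasurable volume {p | ¬ Tendsto (fun n => c n (ψ p)) atTop (𝓝 p)})ᶜ,
      (measurableSet_toMeasurable _ _).compl, ?_, ?_⟩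
    · rw [compl_compl, measure_toMeasurable]; exact ae_iff.1 hBC
    · intro p hp p' hp' h
      have h1 : ∀ p ∈ (toMeasurable volume {p | ¬ Tendsto (fun n => c n (ψ p)) atTop (𝓝 p)})ᶜ,
          Tendsto (fun n => c n (ψ p)) atTop (𝓝 p) := by
        intro p hp
        by_contra hcon
        exact hp (subset_toMeasurable _ _ hcon)
      have h2 := h1 p hp
      rw [h] at h2
      exact tendsto_nhds_unique h2 (h1 p' hp')

lemma iso_ergodic (T : Torus2 → Torus2) (mT : MeasurePreserving T volume volume) (α : ℝ)
    (hα : Irrational α) (ψ : Torus2 → Torus1) (cψ : Continuous ψ) (mψ : MeasurePreserving ψ volume volume)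
    (hψ : ∀ p, ψ (T p) = ψ p + (α : Torus1)) (A0 : Set Torus2) (hA0 : MeasurableSet A0)
    (hA0' : volume A0ᶜ = 0) (hinj : InjOn ψ A0) :
    Ergodic T (volume : Measure Torus2) ∧ IsoToIrrationalRotation T := by
  set A : Set Torus2 := ⋂ n : ℕ, T^[n] ⁻¹' A0 with hA
  have mA : MeasurableSet A := MeasurableSet.iInter fun n => (mT.iterate n).measurable hA0
  have vA : volume Aᶜ = 0 := by
    rw [hA, compl_iInter, measure_iUnion_null_iff]
    intro n
    rw [← preimage_compl, (mT.iterate n).measure_preimage hA0.compl.nullMeasurableSet, hA0']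
  have hAA0 : A ⊆ A0 := fun p hp => mem_iInter.1 hp 0
  have tA : MapsTo T A A := by
    intro p hp
    rw [hA, mem_iInter] at hp ⊢
    intro n
    exact hp (n+1)
  have iA : InjOn ψ A := hinj.mono hAA0
  have mB : MeasurableSet (ψ '' A) := mA.image_of_measurable_injOn cψ.measurable iA
  have vB : volume (ψ '' A)ᶜ = 0 := by
    rw [← mψ.measure_preimage mB.compl.nullMeasurableSet]
    refine measure_mono_null ?_ vA
    intro p hp hpA
    exact hp (mem_image_of_mem ψ hpA)
  have hemb : MeasurableEmbedding (A.domRestrict ψ) := cψ.continuousOn.measurableEmbedding mA iA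
  obtain ⟨φ, mφ, hφ⟩ := hemb.exists_measurable_extend (g := fun p : A => (p : Torus2))
    measurable_subtype_coe (fun _ => ⟨0⟩)
  have hφψ : ∀ p ∈ A, φ (ψ p) = p := fun p hp => congrFun hφ ⟨p, hp⟩
  refine ⟨⟨mT, ⟨?_⟩⟩, α, hα, A, ψ '' A, ψ, φ, mA, mB, vA, vB, tA, ?_, cψ.measurable, mφ, mapsTo_image _ _,
    ?_, hφψ, ?_, mψ.map_eq, fun p _ => hψ p⟩
  · intro S mS hS
    have herg : Ergodic (fun y : Torus1 => y + (α : Torus1)) volume := by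
      rw [AddCircle.ergodic_add_right, addOrderOf_eq_zero_iff']
      intro n hn h0
      rw [← AddCircle.coe_nsmul, AddCircle.coe_eq_zero_iff] at h0
      obtain ⟨k, hk⟩ := h0
      simp only [zsmul_eq_mul, mul_one, nsmul_eq_mul] at hk
      apply hα
      refine ⟨(k:ℚ) / n, ?_⟩
      have : (n:ℝ) ≠ 0 := by positivity
      push_cast
      rw [hk]; field_simp
    have h1 : (fun y : Torus1 => y + (α : Torus1)) ⁻¹' (φ ⁻¹' S) =ᵐ[volume] φ ⁻¹' S := by
      have : ∀ᵐ y ∂(volume : Measure Torus1), y ∈ ψ '' A := by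
        rw [ae_iff]; exact vB
      filter_upwards [this] with y hy
      obtain ⟨p, hp, rfl⟩ := hy
      apply propext
      show φ (ψ p + α) ∈ S ↔ φ (ψ p) ∈ S
      rw [← hψ, hφψ _ (tA hp), hφψ _ hp]
      conv_rhs => rw [← hS]
      rfl
    have h2 := herg.quasiErgodic.ae_empty_or_univ₀ (mφ mS).nullMeasurableSet h1
    have h3 : ψ ⁻¹' (φ ⁻¹' S) =ᵐ[volume] S := by
      have : ∀ᵐ p ∂(volume : Measure Torus2), p ∈ A := by
        rw [ae_iff]; exact vA
      filter_upwards [this] with p hp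
      apply propext
      show φ (ψ p) ∈ S ↔ p ∈ S
      rw [hφψ p hp]
    rw [eventuallyConst_set']
    rcases h2 with h2 | h2
    · left
      exact h3.symm.trans (mψ.quasiMeasurePreserving.preimage_ae_eq h2)
    · right
      exact h3.symm.trans (mψ.quasiMeasurePreserving.preimage_ae_eq h2)
  · rintro _ ⟨p, hp, rfl⟩
    exact ⟨T p, tA hp, hψ p⟩
  · rintro _ ⟨p, hp, rfl⟩
    rw [hφψ p hp]; exact hp
  · rintro _ ⟨p, hp, rfl⟩
    rw [hφψ p hp]

end

section
open MeasureTheory Filter Set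
open scoped Topology ENNReal NNReal ContDiff

/-! ### Slow entropy -/

lemma bowenDist_lt_iff {X : Type*} [PseudoMetricSpace X] (T : X → X) (n : ℕ) (x y : X) {ε : ℝ}
    (hε : 0 < ε) : bowenDist T n x y < ε ↔ ∀ i < n, dist (T^[i] x) (T^[i] y) < ε := by
  unfold bowenDist
  lift ε to ℝ≥0 using hε.le
  rw [NNReal.coe_lt_coe, Finset.sup_lt_iff (by simpa using hε)]
  simp only [Finset.mem_range]
  constructor
  · intro h i hi
    have := h i hi
    rw [← coe_nndist]; exact_mod_cast this
  · intro h i hi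
    have := h i hi
    rw [← coe_nndist] at this; exact_mod_cast this

lemma entropy_abstract {X : Type*} [PseudoMetricSpace X] (T : X → X)
    (hU : ∀ ε > 0, ∀ e > 0, ∀ᶠ m : ℕ in atTop, (bowenCoverNum T m ε : ℝ) ≤ intScale1 4 2 m (1 + e))
    (hL : ∀ ε, 0 < ε → ε < 1/16 → ∀ t < 1, 0 < t →
      ∃ᶠ m : ℕ in atTop, intScale1 4 2 m t ≤ bowenCoverNum T m ε) :
    HasUpperTopSlowEntropy T (intScale1 4 2) 1 := by
  unfold HasUpperTopSlowEntropy
  refine tendsto_const_nhds.congr' ?_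
  have hmem : Ioo (0:ℝ) (1/16) ∈ 𝓝[>] (0:ℝ) := Ioo_mem_nhdsGT (by norm_num)
  filter_upwards [hmem] with ε hε
  obtain ⟨h0, h1⟩ := hε
  symm
  unfold topSlowEntFun
  set A := {t : ℝ | 0 < t ∧ 0 < Filter.atTop.limsup fun n =>
    (bowenCoverNum T n ε : ℝ≥0∞) / ENNReal.ofReal (intScale1 4 2 n t)} with hA
  have hsub : ∀ t ∈ A, t ≤ 1 := by
    rintro t ⟨ht0, ht⟩
    by_contra hcon
    push Not at hcon
    have he : 0 < (t - 1) / 2 := by linarith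
    have hlim : Tendsto (fun n => (bowenCoverNum T n ε : ℝ≥0∞) / ENNReal.ofReal (intScale1 4 2 n t))
        atTop (𝓝 0) := by
      have h2 : Tendsto (fun m => ENNReal.ofReal (Real.exp (-(((t - 1) / 2) * scL m)))) atTop (𝓝 0) := by
        rw [← ENNReal.ofReal_zero]
        refine ENNReal.tendsto_ofReal ?_
        refine Real.tendsto_exp_neg_atTop_nhds_zero.comp ?_
        exact scL_tendsto.const_mul_atTop he
      refine tendsto_of_tendsto_of_tendsto_of_le_of_le' tendsto_const_nhds h2
        (Eventually.of_forall fun _ => zero_le) ?_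
      filter_upwards [hU ε h0 _ he, eventually_ge_atTop 1] with m hm hm1
      rw [intScale_eq hm1] at hm ⊢
      have e1 : (bowenCoverNum T m ε : ℝ≥0∞) = ENNReal.ofReal (bowenCoverNum T m ε : ℝ) := by simp
      rw [e1, ← ENNReal.ofReal_div_of_pos (Real.exp_pos _)]
      apply ENNReal.ofReal_le_ofReal
      rw [div_le_iff₀ (Real.exp_pos _), ← Real.exp_add]
      refine hm.trans (le_of_eq ?_)
      congr 1; ring
    rw [hlim.limsup_eq] at ht
    exact lt_irrefl _ ht
  have hsup : ∀ t, 0 < t → t < 1 → t ∈ A := by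
    intro t ht0 ht1
    refine ⟨ht0, ?_⟩
    refine lt_of_lt_of_le one_pos ?_
    refine le_limsup_of_frequently_le ?_ (by isBoundedDefault)
    have := (hL ε h0 h1 t ht1 ht0).and_eventually (eventually_ge_atTop 1)
    refine this.mono ?_
    rintro m ⟨hm, hm1⟩
    have hpos : 0 < intScale1 4 2 m t := by rw [intScale_eq hm1]; exact Real.exp_pos _
    have e1 : (bowenCoverNum T m ε : ℝ≥0∞) = ENNReal.ofReal (bowenCoverNum T m ε : ℝ) := by simp
    rw [e1, ← ENNReal.ofReal_div_of_pos hpos, ENNReal.one_le_ofReal, le_div_iff₀ hpos, one_mul]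
    exact hm
  apply le_antisymm
  · exact csSup_le ⟨1/2, hsup _ (by norm_num) (by norm_num)⟩ hsub
  · apply le_of_forall_lt
    intro c hc
    obtain ⟨t, ht1, ht2⟩ := exists_between (max_lt hc one_pos)
    exact lt_of_lt_of_le ((le_max_left _ _).trans_lt ht1)
      (le_csSup ⟨1, hsub⟩ (hsup t ((le_max_right _ _).trans_lt ht1) ht2))

lemma entropy (s : ℕ → St) (hv : ∀ n, Valid (s n)) (hst : ∀ n, Step n (s n) (s (n+1)))
    (T : ℝ × ℝ → ℝ × ℝ) (eT : Equi T)
    (hT : ∀ n i z, i ≤ (s (n+1)).M → ‖T^[i] z - tau (s n) (i * (s n).α) z‖ ≤ (1/2)^n/50) :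
    HasUpperTopSlowEntropy (desc T) (intScale1 4 2) 1 := by
  have hMs : StrictMono (fun n => (s n).M) := strictMono_nat_of_lt_succ fun n => (hst n).MM
  have hMn : ∀ n, n ≤ (s n).M := fun n => hMs.le_apply
  have hTd : ∀ n i z, i ≤ (s (n+1)).M → dist ((desc T)^[i] (torusProj z))
      (torusProj (tau (s n) (i * (s n).α) z)) ≤ (1/2)^n/50 := by
    intro n i z hi
    rw [desc_iterate eT]
    exact (dist_proj_le _ _).trans (hT n i z hi)
  have cover : ∀ n m ε, m ≤ (s (n+2)).M → 1/((n:ℝ)+1) + (1/2)^(n+1)/25 < ε →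
      ∃ Z : Finset Torus2, (∀ y, ∃ x ∈ Z, bowenDist (desc T) m x y < ε) ∧
        ∀ m', (s (n+1)).M ≤ m' → (Z.card : ℝ) ≤ intScale1 4 2 m' (1 + 1/(n+1)) := by
    intro n m ε hm hε
    have hε0 : 0 < ε := lt_trans (by positivity) hε
    obtain ⟨Z, hZ1, hZ2⟩ := (hst n).upper
    classical
    refine ⟨Z.image torusProj, fun y => ?_, fun m' hm' => ?_⟩
    · obtain ⟨w, rfl⟩ := torusProj_surj y
      obtain ⟨z, hz, hzw⟩ := hZ1 w
      refine ⟨torusProj z, Finset.mem_image_of_mem _ hz, ?_⟩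
      rw [bowenDist_lt_iff _ _ _ _ hε0]
      intro i hi
      have d1 := hTd (n+1) i z (hi.le.trans hm)
      have d2 := hTd (n+1) i w (hi.le.trans hm)
      have d3 := hzw (i * (s (n+1)).α)
      rw [dist_comm] at d2
      have d4 := dist_triangle4 ((desc T)^[i] (torusProj z)) (torusProj (tau (s (n+1)) (i * (s (n+1)).α) z))
        (torusProj (tau (s (n+1)) (i * (s (n+1)).α) w)) ((desc T)^[i] (torusProj w))
      linarith
    · refine le_trans ?_ (hZ2 m' hm')
      exact_mod_cast Finset.card_image_le
  have small : ∀ ε > 0, ∀ᶠ n : ℕ in atTop, 1/((n:ℝ)+1) + (1/2)^(n+1)/25 < ε := by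
    intro ε hε
    have h1 := tendsto_one_div_add_atTop_nhds_zero_nat (𝕜 := ℝ)
    have h2 := half_tendsto (1/50)
    have h3 := h1.add h2
    rw [add_zero] at h3
    refine (h3.eventually (gt_mem_nhds hε)).mono fun n hn => ?_
    rw [pow_succ]; linarith
  apply entropy_abstract
  · intro ε hε e he
    obtain ⟨n₀, hn₀⟩ := eventually_atTop.1 ((small ε hε).and (small e he))
    filter_upwards [eventually_ge_atTop ((s (n₀+1)).M), eventually_ge_atTop 1,
      scL_tendsto.eventually_ge_atTop 0] with m hm hm1 hmL
    have hex : ∃ k, m < (s k).M := ⟨m + 1, lt_of_lt_of_le (Nat.lt_succ_self m) (hMn (m+1))⟩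
    classical
    set k := Nat.find hex with hk
    have hk1 : m < (s k).M := Nat.find_spec hex
    have hk2 : n₀ + 1 < k := by
      by_contra hcon
      have := hMs.monotone (not_lt.1 hcon)
      omega
    obtain ⟨n, hn⟩ : ∃ n, k = n + 2 := ⟨k - 2, by omega⟩
    have hk3 : (s (n+1)).M ≤ m := by
      by_contra hcon
      exact Nat.find_min hex (m := n + 1) (by omega) (not_le.1 hcon)
    rw [hn] at hk1
    obtain ⟨h1, h2⟩ := hn₀ n (by omega)
    obtain ⟨Z, hZ1, hZ2⟩ := cover n m ε hk1.le h1
    have h3 : bowenCoverNum (desc T) m ε ≤ Z.card := Nat.sInf_le ⟨Z, rfl, hZ1⟩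
    calc (bowenCoverNum (desc T) m ε : ℝ) ≤ Z.card := by exact_mod_cast h3
      _ ≤ intScale1 4 2 m (1 + 1/(n+1)) := hZ2 m hk3
      _ ≤ intScale1 4 2 m (1 + e) := by
        rw [intScale_eq hm1, intScale_eq hm1]
        apply Real.exp_le_exp.2
        apply mul_le_mul_of_nonneg_right _ hmL
        have : (0:ℝ) ≤ (1/2)^(n+1)/25 := by positivity
        linarith
  · intro ε hε hε1 t ht1 ht0
    have hmn : ∀ n, n + 1 ≤ (s (n+1)).m := fun n => by
      have h1 := (hst n).qm
      have h2 := (hv n).q0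
      nlinarith
    rw [frequently_atTop]
    intro m₀
    obtain ⟨n, hn1, hn2, hn3⟩ := ((small (1 - t) (by linarith)).and ((eventually_ge_atTop m₀).and
      ((tendsto_atTop_mono hmn (tendsto_add_atTop_nat 1)).eventually
        (scL_tendsto.eventually_ge_atTop 0)))).exists
    have hm1 : 1 ≤ (s (n+1)).m := (hv (n+1)).m1
    refine ⟨(s (n+1)).m, by have := hmn n; omega, ?_⟩
    obtain ⟨N, f, hN, hf⟩ := (hst n).lower
    have h1 : intScale1 4 2 (s (n+1)).m t ≤ intScale1 4 2 (s (n+1)).m (1 - 1/(n+1)) := by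
      rw [intScale_eq hm1, intScale_eq hm1]
      apply Real.exp_le_exp.2
      apply mul_le_mul_of_nonneg_right _ hn3
      have : (0:ℝ) ≤ (1/2)^(n+1)/25 := by positivity
      linarith
    refine h1.trans (hN.trans ?_)
    rw [Nat.cast_le]
    have hne : {N : ℕ | ∃ F : Finset Torus2, F.card = N ∧
        ∀ y : Torus2, ∃ x ∈ F, bowenDist (desc T) (s (n+1)).m x y < ε}.Nonempty := by
      obtain ⟨n', h1, h2⟩ := ((small ε hε).and (eventually_ge_atTop (s (n+1)).m)).exists
      obtain ⟨Z, hZ, -⟩ := cover n' (s (n+1)).m ε (h2.trans ((by omega : n' ≤ n' + 2).trans (hMn _))) h1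
      exact ⟨_, Z, rfl, hZ⟩
    refine le_csInf hne ?_
    rintro _ ⟨Z, rfl, hZ⟩
    choose x hxZ hx using fun j => hZ (torusProj (f j))
    have hinj : ∀ j j', j < j' → j' < N → x j ≠ x j' := by
      intro j j' hjj hj' heq
      obtain ⟨i, hi, hd⟩ := hf j j' hjj hj'
      have b1 := (bowenDist_lt_iff _ _ _ _ hε).1 (hx j) i hi
      have b2 := (bowenDist_lt_iff _ _ _ _ hε).1 (hx j') i hi
      rw [heq, dist_comm] at b1
      have b3 := dist_triangle ((desc T)^[i] (torusProj (f j))) ((desc T)^[i] (x j'))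
        ((desc T)^[i] (torusProj (f j')))
      have hiM : i ≤ (s (n+1+1)).M := hi.le.trans (hst (n+1)).mM
      have d1 := hTd (n+1) i (f j) hiM
      have d2 := hTd (n+1) i (f j') hiM
      rw [dist_comm] at d1
      have d4 := dist_triangle4 (torusProj (tau (s (n+1)) (i * (s (n+1)).α) (f j)))
        ((desc T)^[i] (torusProj (f j))) ((desc T)^[i] (torusProj (f j')))
        (torusProj (tau (s (n+1)) (i * (s (n+1)).α) (f j')))
      have hp : ((1:ℝ)/2)^(n+1) ≤ 1 := pow_le_one₀ (by norm_num) (by norm_num)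
      linarith
    have := Finset.card_le_card_of_injOn (s := Finset.range N) (t := Z) x (fun j _ => hxZ j) (by
      intro j hj j' hj' h
      rw [Finset.coe_range, mem_Iio] at hj hj'
      rcases lt_trichotomy j j' with hlt | heq | hgt
      · exact absurd h (hinj j j' hlt hj')
      · exact heq
      · exact absurd h.symm (hinj j' j hgt hj))
    rwa [Finset.card_range] at this

lemma main_aux : ∃ q₁ : ℕ, 2 ≤ q₁ ∧ ∃ T : Torus2 → Torus2,
      IsCkTorusDiffeo ⊤ T ∧
      MeasurePreserving T (volume : Measure Torus2) volume ∧
      Ergodic T (volume : Measure Torus2) ∧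
      IsoToIrrationalRotation T ∧
      HasUpperTopSlowEntropy T (intScale1 4 q₁) 1 := by
  obtain ⟨s, hv, hst⟩ := exists_seq
  obtain ⟨T, U, sT, sU, eT, eU, TU, UT, hT, hTi⟩ := exists_limit s hv hst
  obtain ⟨hTd, mT⟩ := limit_mp s hv T sT.continuous eT hT
  obtain ⟨α, hα, hαt⟩ := exists_alpha s hv hst
  obtain ⟨ψ, cψ, mψ, hψ, A0, hA0, hA0', hinj⟩ := exists_psi s hv hst (desc T) α hαt hTd
  obtain ⟨hE, hI⟩ := iso_ergodic (desc T) mT α hα ψ cψ mψ hψ A0 hA0 hA0' hinj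
  have h1 : ∀ p, desc T (desc U p) = p := by
    intro p
    obtain ⟨z, rfl⟩ := torusProj_surj p
    rw [desc_proj eU, desc_proj eT, TU]
  have h2 : ∀ p, desc U (desc T p) = p := by
    intro p
    obtain ⟨z, rfl⟩ := torusProj_surj p
    rw [desc_proj eT, desc_proj eU, UT]
  have hbij : Function.Bijective (desc T) :=
    ⟨Function.LeftInverse.injective h2, Function.RightInverse.surjective h1⟩
  refine ⟨2, le_rfl, desc T, ⟨hbij, ⟨T, sT, fun p => (desc_proj eT p).symm⟩, U, sU, fun p => ?_⟩, mT, hE, hI,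
    entropy s hv hst T eT hTi⟩
  apply hbij.1
  rw [Function.rightInverse_invFun hbij.2, ← desc_proj eU, h1]

end

/-- There exist `q₁ ≥ 2` and an ergodic `C^∞` volume-preserving
diffeomorphism `T` of `𝕋²`, measure-theoretically isomorphic to an irrational circle
rotation, whose upper topological slow entropy w.r.t. `a^{int1,4}` (base `q₁`) equals `1`. -/
theorem stmt4 :
    ∃ q₁ : ℕ, 2 ≤ q₁ ∧ ∃ T : Torus2 → Torus2,
      IsCkTorusDiffeo ⊤ T ∧
      MeasurePreserving T (volume : Measure Torus2) volume ∧
      Ergodic T (volume : Measure Torus2) ∧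
      IsoToIrrationalRotation T ∧
      HasUpperTopSlowEntropy T (intScale1 4 q₁) 1 := by
  exact main_aux
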